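/- For every real number q with 0 < q < 1, the function q ↦ −(1 + k(q)^2)/(1 + k(q) − k(q)^2) is differentiable at q with derivative equal to E(q)^8 E(q^{10})^3 / E(q^2)^7. -/

import Mathlib

open Real

/-- Euler's product `E(q) = ∏_{j=1}^∞ (1 - q^j)`. -/
noncomputable def eulerE (q : ℝ) : ℝ := ∏' j : ℕ, (1 - q ^ (j + 1))

/-- Ramanujan's level-10 function `k(q)`. -/
noncomputable def ramK (q : ℝ) : ℝ :=
  q * ∏' j : ℕ,
    ((1 - q ^ (10 * j + 1)) * (1 - q ^ (10 * j + 2)) * (1 - q ^ (10 * j + 8)) *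
        (1 - q ^ (10 * j + 9))) /
      ((1 - q ^ (10 * j + 3)) * (1 - q ^ (10 * j + 4)) * (1 - q ^ (10 * j + 6)) *
        (1 - q ^ (10 * j + 7)))

/-!
Write `Eₙ = E(q ^ n)`, `k = k(q)` and `ρ = k / q`. The derivative of `-(1 + k²) / (1 + k - k²)` is
`k' (1 - 4k - k²) / (1 + k - k²)²`, and each of the three factors is an eta quotient:

* `k' = ρ E₁ E₂² E₅³ / E₁₀²`: the logarithmic derivative of `k` is a Lambert series twisted by an
  even function modulo `10`. Its Gauss sum at a primitive tenth root of unity `ζ` turns the series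
  into the difference `℘(ζ) - ℘(ζ³)` of two values of the Weierstrass function, and such a
  difference factors into theta functions.
* `1 + k - k² = ρ E₂⁴ E₅² / (E₁² E₁₀⁴)` and `1 - 4k - k² = ρ E₁³ E₅ / (E₂ E₁₀³)`: since
  `1/k - k = E₂ E₅⁵ / (q E₁ E₁₀⁵)`, both are relations among `E₁`, `E₂`, `E₅`, `E₁₀`, which are
  specialisations of the three-term relation for theta functions, itself a consequence of the Jacobi
  triple product.
-/

open Filter Finset Topology

section qPochhammer

/-- The infinite `q`-Pochhammer symbol `(x; q)_∞`. -/
noncomputable def qPochhammer (q x : ℂ) : ℂ := ∏' j : ℕ, (1 - x * q ^ j)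

/-- Euler's product `(q; q)_∞` at a complex nome, the complex counterpart of `eulerE`. -/
noncomputable def eulerProd (q : ℂ) : ℂ := qPochhammer q q

variable {q : ℂ}

lemma summable_norm_neg_mul_pow (hq : ‖q‖ < 1) (x : ℂ) :
    Summable fun j : ℕ => ‖-(x * q ^ j)‖ := by
  simpa only [norm_neg, norm_mul, norm_pow] using
    (summable_geometric_of_lt_one (norm_nonneg q) hq).mul_left ‖x‖

lemma multipliable_qPochhammer (hq : ‖q‖ < 1) (x : ℂ) :
    Multipliable fun j : ℕ => 1 - x * q ^ j := by
  simpa only [sub_eq_add_neg] using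
    multipliable_one_add_of_summable (summable_norm_neg_mul_pow hq x)

lemma norm_mul_pow_lt_one {x : ℂ} (hq : ‖q‖ < 1) (hx : ‖x‖ < 1) (j : ℕ) : ‖x * q ^ j‖ < 1 := by
  rw [norm_mul, norm_pow]
  exact mul_lt_one_of_nonneg_of_lt_one_left (norm_nonneg x) hx
    (pow_le_one₀ (norm_nonneg q) hq.le)

lemma one_sub_ne_zero_of_norm_lt_one {x : ℂ} (hx : ‖x‖ < 1) : 1 - x ≠ 0 :=
  (isUnit_one_sub_of_norm_lt_one hx).ne_zero

lemma norm_pow_lt_one (hq : ‖q‖ < 1) {n : ℕ} (hn : n ≠ 0) : ‖q ^ n‖ < 1 := by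
  rw [norm_pow]
  exact pow_lt_one₀ (norm_nonneg q) hq hn

lemma one_sub_pow_succ_ne_zero (hq : ‖q‖ < 1) (n : ℕ) : 1 - q ^ (n + 1) ≠ 0 :=
  one_sub_ne_zero_of_norm_lt_one (norm_pow_lt_one hq n.succ_ne_zero)

lemma qPochhammer_ne_zero {x : ℂ} (hq : ‖q‖ < 1) (hx : ‖x‖ < 1) : qPochhammer q x ≠ 0 := by
  have hfactor (j : ℕ) : 1 + -(x * q ^ j) ≠ 0 := by
    simpa only [sub_eq_add_neg] using
      one_sub_ne_zero_of_norm_lt_one (norm_mul_pow_lt_one hq hx j)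
  simpa only [qPochhammer, sub_eq_add_neg] using
    tprod_one_add_ne_zero_of_summable hfactor (summable_norm_neg_mul_pow hq x)

lemma eulerProd_ne_zero (hq : ‖q‖ < 1) : eulerProd q ≠ 0 := qPochhammer_ne_zero hq hq

lemma eulerProd_zero : eulerProd 0 = 1 := by simp [eulerProd, qPochhammer]

lemma qPochhammer_eq_one_sub_mul (hq : ‖q‖ < 1) (x : ℂ) :
    qPochhammer q x = (1 - x) * qPochhammer q (x * q) := by
  have htail : Multipliable fun j : ℕ => 1 - x * q ^ (j + 1) := by
    simpa only [pow_succ', mul_assoc] using multipliable_qPochhammer hq (x * q)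
  simpa only [qPochhammer, pow_zero, mul_one, pow_succ', ← mul_assoc] using
    tprod_eq_zero_mul' (f := fun j : ℕ => 1 - x * q ^ j) htail

lemma prod_qPochhammer_pow_mul_of_isPrimitiveRoot {ζ : ℂ} {n : ℕ} (hζ : IsPrimitiveRoot ζ n)
    (hn : 0 < n) (hq : ‖q‖ < 1) (x : ℂ) :
    ∏ i ∈ range n, qPochhammer q (ζ ^ i * x) = qPochhammer (q ^ n) (x ^ n) := by
  simp only [qPochhammer]
  rw [← Multipliable.tprod_finsetProd fun i _ => multipliable_qPochhammer hq _]
  refine tprod_congr fun j => ?_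
  have hroots := congrArg (Polynomial.eval 1)
    (X_pow_sub_C_eq_prod hζ hn (rfl : (x * q ^ j) ^ n = (x * q ^ j) ^ n))
  simp only [Polynomial.eval_sub, Polynomial.eval_pow, Polynomial.eval_X, Polynomial.eval_C,
    Polynomial.eval_prod, one_pow] at hroots
  simp only [mul_assoc, ← hroots]
  ring

lemma qPochhammer_eq_prod_qPochhammer_pow (hq : ‖q‖ < 1) (x : ℂ) {N : ℕ} (hN : 0 < N) :
    qPochhammer q x = ∏ i ∈ range N, qPochhammer (q ^ N) (x * q ^ i) := by
  have hlhs := (multipliable_qPochhammer hq x).hasProd.tendsto_prod_nat.comp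
    (tendsto_id.const_mul_atTop' hN)
  have hrhs : Tendsto (fun m : ℕ => ∏ i ∈ range N, ∏ j ∈ range m, (1 - x * q ^ i * (q ^ N) ^ j))
      atTop (𝓝 (∏ i ∈ range N, qPochhammer (q ^ N) (x * q ^ i))) :=
    tendsto_finsetProd _ fun i _ =>
      (multipliable_qPochhammer (norm_pow_lt_one hq hN.ne') _).hasProd.tendsto_prod_nat
  refine tendsto_nhds_unique hlhs (hrhs.congr fun m => ?_)
  simp only [Function.comp, id]
  induction m with
  | zero => simp
  | succ m ih =>
    simp only [prod_range_succ _ m, prod_mul_distrib]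
    rw [ih, Nat.mul_succ, prod_range_add]
    congr 1
    exact prod_congr rfl fun i _ => by ring

lemma multipliableLocallyUniformlyOn_qPochhammer (hq : ‖q‖ < 1) :
    MultipliableLocallyUniformlyOn (fun (j : ℕ) (x : ℂ) => 1 - x * q ^ j) (Metric.ball 0 1) := by
  simpa only [sub_eq_add_neg] using Summable.multipliableLocallyUniformlyOn_nat_one_add
    (f := fun (j : ℕ) (x : ℂ) => -(x * q ^ j)) (u := fun j => ‖q‖ ^ j) Metric.isOpen_ball
    (summable_geometric_of_lt_one (norm_nonneg q) hq)
    (.of_forall fun j x hx => by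
      rw [norm_neg, norm_mul, norm_pow]
      exact mul_le_of_le_one_left (by positivity) (mem_ball_zero_iff.mp hx).le)
    (fun j => by fun_prop)

lemma differentiableOn_qPochhammer (hq : ‖q‖ < 1) :
    DifferentiableOn ℂ (qPochhammer q) (Metric.ball 0 1) :=
  (multipliableLocallyUniformlyOn_qPochhammer hq).hasProdLocallyUniformlyOn.differentiableOn
    (.of_forall fun _ => by
      simpa [Finset.prod_fn] using DifferentiableOn.finsetProd fun _ _ => by fun_prop)
    Metric.isOpen_ball

lemma analyticAt_qPochhammer {x : ℂ} (hq : ‖q‖ < 1) (hx : ‖x‖ < 1) :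
    AnalyticAt ℂ (qPochhammer q) x :=
  (differentiableOn_qPochhammer hq).analyticAt
    (Metric.isOpen_ball.mem_nhds (mem_ball_zero_iff.mpr hx))

lemma ofReal_eulerE {r : ℝ} (hr : |r| < 1) : (eulerE r : ℂ) = eulerProd r := by
  have hsum : Summable fun j : ℕ => ‖-(r ^ (j + 1))‖ := by
    simpa only [norm_neg, norm_pow] using (summable_nat_add_iff 1).mpr
      (summable_geometric_of_lt_one (norm_nonneg r) hr)
  have hmult : Multipliable fun j : ℕ => 1 - r ^ (j + 1) := by
    simpa only [sub_eq_add_neg] using multipliable_one_add_of_summable hsum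
  have hmap := hmult.map_tprod Complex.ofRealHom Complex.continuous_ofReal
  simpa [eulerE, eulerProd, qPochhammer, pow_succ'] using hmap

end qPochhammer

section JacobiTripleProduct

/-- The modified theta function `θ(x; q) = (x; q)_∞ (q/x; q)_∞`. -/
noncomputable def qTheta (q x : ℂ) : ℂ := qPochhammer q x * qPochhammer q (q / x)

/-- The binomial coefficient `k choose 2`, extended to all integers `k`. -/
def triangle (k : ℤ) : ℤ := k * (k - 1) / 2

/-- The `k`-th term of the Laurent series of `(q; q)_∞ θ(x; q)`. -/
noncomputable def thetaTerm (q x : ℂ) (k : ℤ) : ℂ := (-1) ^ k * q ^ triangle k * x ^ k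

/-- The finite `q`-Pochhammer symbol `(q; q)_n`. -/
noncomputable def qFactorial (q : ℂ) (n : ℕ) : ℂ := ∏ j ∈ range n, (1 - q ^ (j + 1))

/-- The reciprocal `1 / (q; q)_m`, with the convention that it vanishes for `m < 0`. -/
noncomputable def qFactorialInv (q : ℂ) (m : ℤ) : ℂ :=
  if m < 0 then 0 else (qFactorial q m.toNat)⁻¹

/-- The Gaussian binomial coefficient `2n choose n + k`, which vanishes for `n < |k|`. -/
noncomputable def centralQBinom (q : ℂ) (n : ℕ) (k : ℤ) : ℂ :=
  qFactorial q (2 * n) * qFactorialInv q (n + k) * qFactorialInv q (n - k)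

lemma two_mul_triangle (k : ℤ) : 2 * triangle k = k * (k - 1) :=
  Int.mul_ediv_cancel' (Int.even_mul_pred_self k).two_dvd

lemma triangle_succ (k : ℤ) : triangle (k + 1) = triangle k + k := by
  linarith [two_mul_triangle k, two_mul_triangle (k + 1)]

lemma triangle_neg (k : ℤ) : triangle (-k) = triangle k + k := by
  linarith [two_mul_triangle k, two_mul_triangle (-k)]

variable {q x : ℂ}

lemma thetaTerm_succ (hq : q ≠ 0) (hx : x ≠ 0) (k : ℤ) :
    thetaTerm q x (k + 1) = -(x * q ^ k) * thetaTerm q x k := by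
  rw [thetaTerm, thetaTerm, triangle_succ, zpow_add₀ hq, zpow_add₀ (by simp), zpow_add₀ hx,
    zpow_one, zpow_one]
  ring

lemma thetaTerm_neg (hq : q ≠ 0) (k : ℤ) : thetaTerm q x (-k) = thetaTerm q (q / x) k := by
  rw [thetaTerm, thetaTerm, triangle_neg, zpow_add₀ hq, div_zpow, zpow_neg, zpow_neg, ← inv_zpow,
    inv_neg, inv_one]
  ring

lemma thetaTerm_ne_zero (hq : q ≠ 0) (hx : x ≠ 0) (k : ℤ) : thetaTerm q x k ≠ 0 :=
  mul_ne_zero (mul_ne_zero (zpow_ne_zero _ (by simp)) (zpow_ne_zero _ hq)) (zpow_ne_zero _ hx)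

lemma summable_thetaTerm_natCast (hq0 : q ≠ 0) (hq : ‖q‖ < 1) (hx : x ≠ 0) :
    Summable fun n : ℕ => thetaTerm q x n := by
  refine summable_of_ratio_test_tendsto_lt_one zero_lt_one
    (.of_forall fun n => thetaTerm_ne_zero hq0 hx n) ?_
  have hratio : Tendsto (fun n : ℕ => ‖x‖ * ‖q‖ ^ n) atTop (𝓝 0) := by
    simpa using (tendsto_pow_atTop_nhds_zero_of_lt_one (norm_nonneg q) hq).const_mul ‖x‖
  refine hratio.congr fun n => ?_
  rw [Nat.cast_succ, thetaTerm_succ hq0 hx, norm_mul,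
    mul_div_cancel_right₀ _ (norm_ne_zero_iff.mpr (thetaTerm_ne_zero hq0 hx n))]
  simp

lemma summable_thetaTerm (hq0 : q ≠ 0) (hq : ‖q‖ < 1) (hx : x ≠ 0) : Summable (thetaTerm q x) :=
  .of_nat_of_neg (summable_thetaTerm_natCast hq0 hq hx) <|
    (summable_thetaTerm_natCast hq0 hq (div_ne_zero hq0 hx)).congr
      fun n => (thetaTerm_neg hq0 n).symm

lemma qFactorial_succ (q : ℂ) (n : ℕ) :
    qFactorial q (n + 1) = qFactorial q n * (1 - q ^ (n + 1)) :=
  prod_range_succ _ n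

lemma tendsto_qFactorial (hq : ‖q‖ < 1) : Tendsto (qFactorial q) atTop (𝓝 (eulerProd q)) :=
  (multipliable_qPochhammer hq q).hasProd.tendsto_prod_nat.congr
    fun _ => prod_congr rfl fun j _ => by rw [pow_succ']

lemma exists_norm_qFactorial_le (hq : ‖q‖ < 1) : ∃ C, ∀ n, ‖qFactorial q n‖ ≤ C := by
  simpa using isBounded_iff_forall_norm_le.mp
    (Metric.isBounded_range_of_tendsto _ (tendsto_qFactorial hq))

lemma qFactorialInv_sub_one (hq : ‖q‖ < 1) (m : ℤ) :
    qFactorialInv q (m - 1) = (1 - q ^ m) * qFactorialInv q m := by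
  unfold qFactorialInv
  rcases lt_trichotomy m 0 with hneg | rfl | hpos
  · simp [hneg, show m - 1 < 0 by omega]
  · simp
  · obtain ⟨n, rfl⟩ : ∃ n : ℕ, m = (n + 1 : ℕ) := ⟨(m - 1).toNat, by omega⟩
    rw [if_neg (by omega), if_neg (by omega), zpow_natCast, Int.toNat_natCast,
      show ((n + 1 : ℕ) - 1 : ℤ).toNat = n by omega, qFactorial_succ, mul_inv, mul_left_comm,
      mul_inv_cancel₀ (one_sub_pow_succ_ne_zero hq n), mul_one]

lemma exists_norm_qFactorialInv_le (hq : ‖q‖ < 1) :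
    ∃ C, 0 ≤ C ∧ ∀ m, ‖qFactorialInv q m‖ ≤ C := by
  obtain ⟨C, hC⟩ : ∃ C, ∀ n, ‖(qFactorial q n)⁻¹‖ ≤ C := by
    simpa using isBounded_iff_forall_norm_le.mp (Metric.isBounded_range_of_tendsto _
      ((tendsto_qFactorial hq).inv₀ (eulerProd_ne_zero hq)))
  have hC0 : 0 ≤ C := (norm_nonneg _).trans (hC 0)
  refine ⟨C, hC0, fun m => ?_⟩
  unfold qFactorialInv
  split_ifs
  · simpa using hC0
  · exact hC _

lemma tendsto_qFactorialInv (hq : ‖q‖ < 1) :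
    Tendsto (qFactorialInv q) atTop (𝓝 (eulerProd q)⁻¹) := by
  have htoNat : Tendsto Int.toNat atTop atTop :=
    tendsto_atTop.mpr fun b => (eventually_ge_atTop (b : ℤ)).mono fun m hm => by omega
  refine (((tendsto_qFactorial hq).comp htoNat).inv₀ (eulerProd_ne_zero hq)).congr' ?_
  filter_upwards [eventually_ge_atTop 0] with m hm
  simp [qFactorialInv, not_lt.mpr hm]

lemma tendsto_centralQBinom (hq : ‖q‖ < 1) (k : ℤ) :
    Tendsto (fun n => centralQBinom q n k) atTop (𝓝 (eulerProd q)⁻¹) := by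
  have hnum : Tendsto (fun n : ℕ => qFactorial q (2 * n)) atTop (𝓝 (eulerProd q)) :=
    (tendsto_qFactorial hq).comp (tendsto_id.const_mul_atTop' two_pos)
  have hadd : Tendsto (fun n : ℕ => (n : ℤ) + k) atTop atTop :=
    tendsto_atTop_add_const_right _ _ tendsto_natCast_atTop_atTop
  have hsub : Tendsto (fun n : ℕ => (n : ℤ) - k) atTop atTop :=
    tendsto_atTop_add_const_right _ _ tendsto_natCast_atTop_atTop
  have hlim := (hnum.mul ((tendsto_qFactorialInv hq).comp hadd)).mul
    ((tendsto_qFactorialInv hq).comp hsub)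
  rwa [mul_inv_cancel₀ (eulerProd_ne_zero hq), one_mul] at hlim

lemma exists_norm_centralQBinom_le (hq : ‖q‖ < 1) :
    ∃ C, ∀ n k, ‖centralQBinom q n k‖ ≤ C := by
  obtain ⟨A, hA⟩ := exists_norm_qFactorial_le hq
  obtain ⟨B, hB0, hB⟩ := exists_norm_qFactorialInv_le hq
  have hA0 : 0 ≤ A := (norm_nonneg _).trans (hA 0)
  refine ⟨A * B * B, fun n k => ?_⟩
  rw [centralQBinom, norm_mul, norm_mul]
  gcongr <;> apply_assumption

lemma centralQBinom_zero (q : ℂ) (k : ℤ) : centralQBinom q 0 k = if k = 0 then 1 else 0 := by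
  rcases lt_trichotomy k 0 with hneg | rfl | hpos
  · simp [centralQBinom, qFactorialInv, hneg, hneg.ne]
  · simp [centralQBinom, qFactorialInv, qFactorial]
  · simp [centralQBinom, qFactorialInv, hpos, hpos.ne']

lemma centralQBinom_succ (hq0 : q ≠ 0) (hq : ‖q‖ < 1) (n : ℕ) (k : ℤ) :
    centralQBinom q (n + 1) k = (1 + q ^ (2 * n + 1)) * centralQBinom q n k
      + q ^ ((n : ℤ) + 1 - k) * centralQBinom q n (k - 1)
      + q ^ ((n : ℤ) + 1 + k) * centralQBinom q n (k + 1) := by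
  have hplus : qFactorialInv q (n + k) =
      (1 - q ^ ((n : ℤ) + k + 1)) * qFactorialInv q (n + k + 1) := by
    rw [← qFactorialInv_sub_one hq, add_sub_cancel_right]
  have hminus : qFactorialInv q (n - k) =
      (1 - q ^ ((n : ℤ) - k + 1)) * qFactorialInv q (n - k + 1) := by
    rw [← qFactorialInv_sub_one hq, add_sub_cancel_right]
  simp only [centralQBinom, Nat.cast_add_one, mul_add_one, qFactorial_succ,
    show (n : ℤ) + (k - 1) = n + k - 1 by ring, show (n : ℤ) - (k + 1) = n - k - 1 by ring,
    show (n : ℤ) + 1 + k = n + k + 1 by ring, show (n : ℤ) + 1 - k = n - k + 1 by ring,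
    show (n : ℤ) + (k + 1) = n + k + 1 by ring, show (n : ℤ) - (k - 1) = n - k + 1 by ring,
    qFactorialInv_sub_one hq (n + k), qFactorialInv_sub_one hq (n - k), hplus, hminus]
  simp only [zpow_add₀ hq0, zpow_sub₀ hq0, zpow_natCast, zpow_one, pow_add, pow_mul', pow_one]
  have hk : q ^ k ≠ 0 := zpow_ne_zero k hq0
  field_simp
  ring

theorem hasSum_centralQBinom_mul_thetaTerm (hq0 : q ≠ 0) (hq : ‖q‖ < 1) (hx : x ≠ 0) (n : ℕ) :
    HasSum (fun k => centralQBinom q n k * thetaTerm q x k)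
      (∏ j ∈ range n, ((1 - x * q ^ j) * (1 - q / x * q ^ j))) := by
  induction n with
  | zero =>
    have hzero : (fun k => centralQBinom q 0 k * thetaTerm q x k) =
        fun k => if k = 0 then 1 else 0 := by
      ext k
      rw [centralQBinom_zero]
      split_ifs with hk <;> simp [hk, thetaTerm, triangle]
    simpa [hzero] using hasSum_ite_eq (0 : ℤ) (1 : ℂ)
  | succ n ih =>
    rw [prod_range_succ]
    set S := ∏ j ∈ range n, ((1 - x * q ^ j) * (1 - q / x * q ^ j))
    have hpred := ((Equiv.subRight (1 : ℤ)).hasSum_iff.mpr ih).mul_left (q ^ n * x)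
    have hsucc := ((Equiv.addRight (1 : ℤ)).hasSum_iff.mpr ih).mul_left (q ^ (n + 1) / x)
    have hfactor : S * ((1 - x * q ^ n) * (1 - q / x * q ^ n)) =
        (1 + q ^ (2 * n + 1)) * S - q ^ n * x * S - q ^ (n + 1) / x * S := by
      field_simp
      ring
    rw [hfactor]
    refine (((ih.mul_left _).sub hpred).sub hsucc).congr_fun fun k => ?_
    have hterm := thetaTerm_succ hq0 hx (k - 1)
    rw [sub_add_cancel] at hterm
    simp only [Function.comp_apply, Equiv.subRight_apply, Equiv.coe_addRight,
      thetaTerm_succ hq0 hx k, centralQBinom_succ hq0 hq]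
    rw [hterm]
    simp only [zpow_add₀ hq0, zpow_sub₀ hq0, zpow_natCast, zpow_one, pow_add, pow_one]
    have hk : q ^ k ≠ 0 := zpow_ne_zero k hq0
    field_simp
    ring

theorem jacobi_triple_product (hq0 : q ≠ 0) (hq : ‖q‖ < 1) (hx : x ≠ 0) :
    HasSum (thetaTerm q x) (eulerProd q * qTheta q x) := by
  have hsum := summable_thetaTerm hq0 hq hx
  obtain ⟨C, hC⟩ := exists_norm_centralQBinom_le hq
  have hseries : Tendsto (fun n => ∑' k, centralQBinom q n k * thetaTerm q x k) atTop
      (𝓝 (∑' k, (eulerProd q)⁻¹ * thetaTerm q x k)) :=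
    tendsto_tsum_of_dominated_convergence (hsum.norm.mul_left C)
      (fun k => (tendsto_centralQBinom hq k).mul_const _)
      (.of_forall fun n k => by
        rw [norm_mul]
        exact mul_le_mul_of_nonneg_right (hC n k) (norm_nonneg _))
  have hprod : Tendsto (fun n => ∑' k, centralQBinom q n k * thetaTerm q x k) atTop
      (𝓝 (qTheta q x)) := by
    refine ((multipliable_qPochhammer hq x).hasProd.tendsto_prod_nat.mul
      (multipliable_qPochhammer hq (q / x)).hasProd.tendsto_prod_nat).congr fun n => ?_
    rw [(hasSum_centralQBinom_mul_thetaTerm hq0 hq hx n).tsum_eq, prod_mul_distrib]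
  rw [tendsto_nhds_unique hprod hseries, tsum_mul_left,
    mul_inv_cancel_left₀ (eulerProd_ne_zero hq)]
  exact hsum.hasSum

end JacobiTripleProduct

section ThreeTermRelation

/-- The even part `∑ q^(k²) x^(2k)` of the theta series `∑ q^(m²/4) x^m`. -/
noncomputable def evenTheta (q x : ℂ) : ℂ := ∑' k : ℤ, q ^ (k ^ 2) * x ^ (2 * k)

/-- The odd part of the theta series `∑ q^(m²/4) x^m`, divided by `q^(1/4)`. -/
noncomputable def oddTheta (q x : ℂ) : ℂ := ∑' k : ℤ, q ^ (k ^ 2 + k) * x ^ (2 * k + 1)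

variable {q x y : ℂ}

lemma thetaTerm_sq_neg_mul (hq0 : q ≠ 0) (x : ℂ) (c k : ℤ) :
    thetaTerm (q ^ 2) (-(q ^ c * x)) k = q ^ (k ^ 2 - k + c * k) * x ^ k := by
  rw [thetaTerm, mul_right_comm, ← mul_zpow, neg_one_mul, neg_neg, mul_zpow, ← zpow_mul,
    ← zpow_natCast, ← zpow_mul, mul_right_comm, ← zpow_add₀ hq0]
  congr 2
  push_cast
  linarith [two_mul_triangle k]

lemma summable_zpow_sq_sub_mul_zpow (hq0 : q ≠ 0) (hq : ‖q‖ < 1) (hx : x ≠ 0) (c : ℤ) :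
    Summable fun k : ℤ => q ^ (k ^ 2 - k + c * k) * x ^ k :=
  (summable_thetaTerm (pow_ne_zero 2 hq0) (norm_pow_lt_one hq two_ne_zero)
    (neg_ne_zero.mpr (mul_ne_zero (zpow_ne_zero c hq0) hx))).congr
      (thetaTerm_sq_neg_mul hq0 x c)

lemma hasSum_evenTheta (hq0 : q ≠ 0) (hq : ‖q‖ < 1) (hx : x ≠ 0) :
    HasSum (fun k : ℤ => q ^ (k ^ 2) * x ^ (2 * k)) (evenTheta q x) := by
  refine ((summable_zpow_sq_sub_mul_zpow hq0 hq (zpow_ne_zero 2 hx) 1).congr fun k => ?_).hasSum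
  rw [zpow_mul, one_mul, sub_add_cancel]

lemma hasSum_oddTheta (hq0 : q ≠ 0) (hq : ‖q‖ < 1) (hx : x ≠ 0) :
    HasSum (fun k : ℤ => q ^ (k ^ 2 + k) * x ^ (2 * k + 1)) (oddTheta q x) := by
  refine (((summable_zpow_sq_sub_mul_zpow hq0 hq (zpow_ne_zero 2 hx) 2).mul_right x).congr
    fun k => ?_).hasSum
  rw [zpow_add_one₀ hx, zpow_mul, ← mul_assoc, two_mul, ← add_assoc, sub_add_cancel]

lemma hasSum_int_prod_of_parity {F : ℤ × ℤ → ℂ} {a b : ℂ}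
    (heven : HasSum (fun w : ℤ × ℤ => F (w.1 + w.2 + 1, w.1 - w.2 + 1)) a)
    (hodd : HasSum (fun w : ℤ × ℤ => F (w.1 + w.2 + 1, w.1 - w.2)) b) :
    HasSum F (a + b) := by
  let even : ℤ × ℤ → ℤ × ℤ := fun w => (w.1 + w.2 + 1, w.1 - w.2 + 1)
  let odd : ℤ × ℤ → ℤ × ℤ := fun w => (w.1 + w.2 + 1, w.1 - w.2)
  have heven_inj : even.Injective := by
    rintro ⟨a, b⟩ ⟨c, d⟩ h
    simp only [even, Prod.mk.injEq] at h ⊢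
    omega
  have hodd_inj : odd.Injective := by
    rintro ⟨a, b⟩ ⟨c, d⟩ h
    simp only [odd, Prod.mk.injEq] at h ⊢
    omega
  have hcompl : IsCompl (Set.range even) (Set.range odd) := by
    refine ⟨Set.disjoint_left.mpr ?_, codisjoint_iff.mpr (Set.eq_univ_of_forall ?_)⟩
    · rintro _ ⟨⟨a, b⟩, rfl⟩ ⟨⟨c, d⟩, h⟩
      simp only [even, odd, Prod.mk.injEq] at h
      omega
    · rintro ⟨m, n⟩
      rcases Int.even_or_odd' (m - n) with ⟨b, hb | hb⟩
      · exact .inl ⟨(n + b - 1, b), by simp only [even, Prod.mk.injEq]; omega⟩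
      · exact .inr ⟨(n + b, b), by simp only [odd, Prod.mk.injEq]; omega⟩
  exact (heven_inj.hasSum_range_iff.mpr heven).add_isCompl hcompl
    (hodd_inj.hasSum_range_iff.mpr hodd)

lemma thetaTerm_mul_thetaTerm (hq0 : q ≠ 0) (hx : x ≠ 0) (hy : y ≠ 0) (m n : ℤ) :
    thetaTerm q (x * y) m * thetaTerm q (x / y) n =
      (-1) ^ (m + n) * q ^ (triangle m + triangle n) * (x ^ (m + n) * y ^ (m - n)) := by
  rw [thetaTerm, thetaTerm, mul_zpow, div_zpow, zpow_add₀ hq0, zpow_add₀ hx, zpow_sub₀ hy,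
    zpow_add₀ (by simp : (-1 : ℂ) ≠ 0)]
  field_simp

lemma hasSum_int_prod_mul {f g : ℤ → ℂ} {a b : ℂ} (hf : HasSum f a) (hg : HasSum g b) :
    HasSum (fun w : ℤ × ℤ => f w.1 * g w.2) (a * b) :=
  hf.mul hg (summable_mul_of_summable_norm hf.summable.norm hg.summable.norm)

theorem eulerProd_sq_mul_qTheta_mul_qTheta (hq0 : q ≠ 0) (hq : ‖q‖ < 1) (hx : x ≠ 0)
    (hy : y ≠ 0) :
    eulerProd q ^ 2 * (qTheta q (x * y) * qTheta q (x / y)) =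
      x * (oddTheta q x * evenTheta q y - evenTheta q x * oddTheta q y) := by
  have hprod := hasSum_int_prod_mul (jacobi_triple_product hq0 hq (mul_ne_zero hx hy))
    (jacobi_triple_product hq0 hq (div_ne_zero hx hy))
  have heven := (hasSum_int_prod_mul (hasSum_oddTheta hq0 hq hx)
    (hasSum_evenTheta hq0 hq hy)).mul_left x
  have hodd := (hasSum_int_prod_mul (hasSum_evenTheta hq0 hq hx)
    (hasSum_oddTheta hq0 hq hy)).mul_left (-x)
  have hsplit := hasSum_int_prod_of_parity
    (F := fun w => thetaTerm q (x * y) w.1 * thetaTerm q (x / y) w.2)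
    (heven.congr_fun fun ⟨a, b⟩ => ?_) (hodd.congr_fun fun ⟨a, b⟩ => ?_)
  · linear_combination hprod.unique hsplit
  · have hexp : triangle (a + b + 1) + triangle (a - b + 1) = a ^ 2 + a + b ^ 2 := by
      linarith [two_mul_triangle (a + b + 1), two_mul_triangle (a - b + 1)]
    have hsign : (-1 : ℂ) ^ (a + b + 1 + (a - b + 1)) = 1 := Even.neg_one_zpow ⟨a + 1, by ring⟩
    rw [thetaTerm_mul_thetaTerm hq0 hx hy, hexp, hsign, zpow_add₀ hq0,
      show a + b + 1 + (a - b + 1) = 2 * a + 1 + 1 by ring, zpow_add_one₀ hx (2 * a + 1),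
      show a + b + 1 - (a - b + 1) = 2 * b by ring]
    ring
  · have hexp : triangle (a + b + 1) + triangle (a - b) = a ^ 2 + (b ^ 2 + b) := by
      linarith [two_mul_triangle (a + b + 1), two_mul_triangle (a - b)]
    have hsign : (-1 : ℂ) ^ (a + b + 1 + (a - b)) = -1 := Odd.neg_one_zpow ⟨a, by ring⟩
    rw [thetaTerm_mul_thetaTerm hq0 hx hy, hexp, hsign, zpow_add₀ hq0,
      show a + b + 1 + (a - b) = 2 * a + 1 by ring, zpow_add_one₀ hx,
      show a + b + 1 - (a - b) = 2 * b + 1 by ring]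
    ring

theorem qTheta_three_term (hq0 : q ≠ 0) (hq : ‖q‖ < 1) {x y u v : ℂ} (hx : x ≠ 0) (hy : y ≠ 0)
    (hu : u ≠ 0) (hv : v ≠ 0) :
    qTheta q (x * y) * qTheta q (x / y) * (qTheta q (u * v) * qTheta q (u / v)) -
        qTheta q (x * v) * qTheta q (x / v) * (qTheta q (u * y) * qTheta q (u / y)) =
      u / y * (qTheta q (y * v) * qTheta q (y / v) * (qTheta q (x * u) * qTheta q (x / u))) := by
  refine mul_left_cancel₀ (pow_ne_zero 4 (eulerProd_ne_zero hq)) ?_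
  have hformula {z w : ℂ} (hz : z ≠ 0) (hw : w ≠ 0) :=
    eulerProd_sq_mul_qTheta_mul_qTheta hq0 hq hz hw
  calc
    _ = (eulerProd q ^ 2 * (qTheta q (x * y) * qTheta q (x / y))) *
          (eulerProd q ^ 2 * (qTheta q (u * v) * qTheta q (u / v))) -
        (eulerProd q ^ 2 * (qTheta q (x * v) * qTheta q (x / v))) *
          (eulerProd q ^ 2 * (qTheta q (u * y) * qTheta q (u / y))) := by ring
    _ = u / y * ((eulerProd q ^ 2 * (qTheta q (y * v) * qTheta q (y / v))) *
          (eulerProd q ^ 2 * (qTheta q (x * u) * qTheta q (x / u)))) := by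
      rw [hformula hx hy, hformula hu hv, hformula hx hv, hformula hu hy, hformula hy hv,
        hformula hx hu]
      field_simp
      ring
    _ = _ := by ring

lemma qTheta_nome_div (hq0 : q ≠ 0) (x : ℂ) : qTheta q (q / x) = qTheta q x := by
  rw [qTheta, qTheta, div_div_cancel₀ hq0, mul_comm]

lemma qTheta_eq_one_sub_mul (hq : ‖q‖ < 1) (x : ℂ) :
    qTheta q x = (1 - x) * (qPochhammer q (x * q) * qPochhammer q (q / x)) := by
  rw [qTheta, qPochhammer_eq_one_sub_mul hq x, mul_assoc]

lemma qTheta_inv (hq : ‖q‖ < 1) (hx : x ≠ 0) : qTheta q x⁻¹ = -(qTheta q x / x) := by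
  rw [qTheta_eq_one_sub_mul hq, qTheta_eq_one_sub_mul hq x, div_inv_eq_mul, mul_comm q,
    inv_mul_eq_div]
  field_simp
  ring

lemma qTheta_quintic_relation (hq0 : q ≠ 0) (hq : ‖q‖ < 1) {z : ℂ} (hz : z ≠ 0) :
    qTheta q (z ^ 2) ^ 2 * qTheta q (z ^ 4) * qTheta q (z ^ 6) =
      qTheta q z * qTheta q (z ^ 3) * qTheta q (z ^ 5) ^ 2 +
        z * (qTheta q z ^ 2 * qTheta q (z ^ 3) * qTheta q (z ^ 7)) := by
  have hrel := qTheta_three_term hq0 hq (pow_ne_zero 3 hz) hz (pow_ne_zero 4 hz) (pow_ne_zero 2 hz)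
  have hinv := qTheta_inv hq hz
  rw [show z ^ 3 * z = z ^ 4 by ring, show z ^ 3 / z = z ^ 2 by field_simp,
    show z ^ 4 * z ^ 2 = z ^ 6 by ring, show z ^ 4 / z ^ 2 = z ^ 2 by field_simp,
    show z ^ 3 * z ^ 2 = z ^ 5 by ring, show z ^ 3 / z ^ 2 = z by field_simp,
    show z ^ 4 * z = z ^ 5 by ring, show z ^ 4 / z = z ^ 3 by field_simp,
    show z * z ^ 2 = z ^ 3 by ring, show z / z ^ 2 = z⁻¹ by field_simp,
    show z ^ 3 * z ^ 4 = z ^ 7 by ring, show z ^ 3 / z ^ 4 = z⁻¹ by field_simp, hinv] at hrel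
  field_simp at hrel
  linear_combination hrel

lemma qTheta_decic_relation (hq0 : q ≠ 0) (hq : ‖q‖ < 1) {z : ℂ} (hz : z ≠ 0) :
    qTheta q (z ^ 3) * qTheta q (z ^ 7) * qTheta q (z ^ 4) ^ 2 =
      qTheta q (z ^ 2) * qTheta q (z ^ 6) * qTheta q (z ^ 5) ^ 2 +
        z ^ 2 * (qTheta q z * qTheta q (z ^ 9) * qTheta q (z ^ 2) ^ 2) := by
  have hrel := qTheta_three_term hq0 hq (pow_ne_zero 5 hz) (pow_ne_zero 2 hz) (pow_ne_zero 4 hz)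
    one_ne_zero
  rw [show z ^ 5 * z ^ 2 = z ^ 7 by ring, show z ^ 5 / z ^ 2 = z ^ 3 by field_simp,
    show z ^ 4 * z ^ 2 = z ^ 6 by ring, show z ^ 4 / z ^ 2 = z ^ 2 by field_simp,
    show z ^ 5 * z ^ 4 = z ^ 9 by ring, show z ^ 5 / z ^ 4 = z by field_simp] at hrel
  simp only [mul_one, div_one] at hrel
  linear_combination hrel

end ThreeTermRelation

section LambertSeries

/-- The Lambert series `∑_{n ≥ 1} n^m x^n / (1 - q^n)`. -/
noncomputable def lambertSeries (m : ℕ) (q x : ℂ) : ℂ :=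
  ∑' n : ℕ, (n + 1) ^ m * x ^ (n + 1) / (1 - q ^ (n + 1))

lemma one_sub_norm_le_norm_one_sub_pow {K : Type*} [NormedField K] {q : K} (hq : ‖q‖ < 1)
    (n : ℕ) : 1 - ‖q‖ ≤ ‖1 - q ^ (n + 1)‖ :=
  calc
    1 - ‖q‖ ≤ ‖(1 : K)‖ - ‖q ^ (n + 1)‖ := by
      rw [norm_one, norm_pow]
      gcongr
      exact pow_le_of_le_one (norm_nonneg q) hq.le n.succ_ne_zero
    _ ≤ ‖1 - q ^ (n + 1)‖ := norm_sub_norm_le _ _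

lemma norm_lambertTerm_le {K : Type*} [RCLike K] {q x : K} (hq : ‖q‖ < 1) (m n : ℕ) {r : ℝ}
    (hx : ‖x‖ ≤ r) :
    ‖((n : K) + 1) ^ m * x ^ n / (1 - q ^ (n + 1))‖ ≤ ((n : ℝ) + 1) ^ m * r ^ n / (1 - ‖q‖) := by
  have hcast : ‖(n : K) + 1‖ = (n : ℝ) + 1 := by
    exact_mod_cast RCLike.norm_natCast (K := K) (n + 1)
  have hden := one_sub_norm_le_norm_one_sub_pow hq n
  have hr : 0 ≤ r := (norm_nonneg x).trans hx
  rw [norm_div, norm_mul, norm_pow, norm_pow, hcast]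
  gcongr

lemma summable_succ_pow_mul_geometric (m : ℕ) {r : ℝ} (hr0 : 0 ≤ r) (hr : r < 1) :
    Summable fun n : ℕ => ((n : ℝ) + 1) ^ m * r ^ n := by
  simp only [add_pow, one_pow, mul_one, sum_mul]
  refine summable_sum fun i _ => ?_
  exact ((summable_pow_mul_geometric_of_norm_lt_one i (by rwa [Real.norm_of_nonneg hr0])).mul_left
    (m.choose i : ℝ)).congr fun n => by ring

variable {q x : ℂ}

lemma summable_lambertSeries (m : ℕ) (hq : ‖q‖ < 1) (hx : ‖x‖ < 1) :
    Summable fun n : ℕ => ((n : ℂ) + 1) ^ m * x ^ (n + 1) / (1 - q ^ (n + 1)) := by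
  have hsum : Summable fun n : ℕ => ((n : ℂ) + 1) ^ m * x ^ n / (1 - q ^ (n + 1)) :=
    .of_norm_bounded ((summable_succ_pow_mul_geometric m (norm_nonneg x) hx).div_const (1 - ‖q‖))
      fun n => norm_lambertTerm_le hq m n le_rfl
  exact (hsum.mul_left x).congr fun n => by ring

lemma hasDerivAt_lambertSeries (m : ℕ) (hq : ‖q‖ < 1) (hx0 : x ≠ 0) (hx : ‖x‖ < 1) :
    HasDerivAt (lambertSeries m q) (lambertSeries (m + 1) q x / x) x := by
  obtain ⟨r, hxr, hr⟩ := exists_between hx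
  have hr0 : 0 < r := (norm_nonneg x).trans_lt hxr
  have hderiv := hasDerivAt_tsum_of_isPreconnected
    (g := fun (n : ℕ) (z : ℂ) => (n + 1) ^ m * z ^ (n + 1) / (1 - q ^ (n + 1)))
    (g' := fun (n : ℕ) (z : ℂ) => (n + 1) ^ (m + 1) * z ^ n / (1 - q ^ (n + 1)))
    ((summable_succ_pow_mul_geometric (m + 1) hr0.le hr).div_const (1 - ‖q‖))
    Metric.isOpen_ball (convex_ball (0 : ℂ) r).isPreconnected
    (fun n z _ => (((hasDerivAt_pow (n + 1) z).const_mul _).div_const _).congr_deriv (by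
      rw [Nat.add_sub_cancel]
      push_cast
      ring))
    (fun n z hz => norm_lambertTerm_le hq (m + 1) n (mem_ball_zero_iff.mp hz).le)
    (Metric.mem_ball_self hr0) (by simp) (mem_ball_zero_iff.mpr hxr)
  refine hderiv.congr_deriv ?_
  rw [lambertSeries, ← tsum_div_const]
  exact tsum_congr fun n => by rw [eq_div_iff hx0]; ring

lemma summable_uncurry_mul_pow (hq : ‖q‖ < 1) (hx : ‖x‖ < 1) :
    Summable (Function.uncurry fun j n : ℕ => q ^ j * (x * q ^ j) ^ n) := by
  have hgeom := summable_mul_of_summable_norm (summable_norm_geometric_of_norm_lt_one hq)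
    (summable_norm_geometric_of_norm_lt_one hx)
  refine .of_norm_bounded hgeom.norm fun ⟨j, n⟩ => ?_
  simp only [Function.uncurry, norm_mul, norm_pow, mul_pow]
  gcongr
  exact mul_le_of_le_one_right (by positivity) (pow_le_one₀ (by positivity)
    (pow_le_one₀ (norm_nonneg q) hq.le))

lemma tsum_pow_div_one_sub_mul_pow (hq : ‖q‖ < 1) (hx : ‖x‖ < 1) :
    x * ∑' j : ℕ, q ^ j / (1 - x * q ^ j) = lambertSeries 0 q x := by
  have hrow (j : ℕ) : ∑' n : ℕ, q ^ j * (x * q ^ j) ^ n = q ^ j / (1 - x * q ^ j) := by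
    rw [tsum_mul_left, tsum_geometric_of_norm_lt_one (norm_mul_pow_lt_one hq hx j),
      div_eq_mul_inv]
  have hcol (n : ℕ) : ∑' j : ℕ, q ^ j * (x * q ^ j) ^ n = x ^ n / (1 - q ^ (n + 1)) := by
    rw [div_eq_mul_inv, ← tsum_geometric_of_norm_lt_one (norm_pow_lt_one hq (n := n + 1)
      (by omega)), ← tsum_mul_left]
    exact tsum_congr fun j => by ring
  simp only [← hrow]
  rw [← (summable_uncurry_mul_pow hq hx).tsum_comm, lambertSeries, ← tsum_mul_left]
  exact tsum_congr fun n => by rw [hcol]; ring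

lemma logDeriv_qPochhammer (hq : ‖q‖ < 1) (hx : ‖x‖ < 1) :
    logDeriv (qPochhammer q) x = -∑' j : ℕ, q ^ j / (1 - x * q ^ j) := by
  have hfactor (j : ℕ) : logDeriv (fun z : ℂ => 1 - z * q ^ j) x = -(q ^ j / (1 - x * q ^ j)) := by
    rw [logDeriv_apply, (((hasDerivAt_id' x).mul_const (q ^ j)).const_sub 1).deriv, one_mul,
      neg_div]
  have hsum : Summable fun j : ℕ => q ^ j / (1 - x * q ^ j) :=
    (summable_uncurry_mul_pow hq hx).prod.congr fun j => by
      simp only [Function.uncurry]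
      rw [tsum_mul_left, tsum_geometric_of_norm_lt_one (norm_mul_pow_lt_one hq hx j),
        div_eq_mul_inv]
  have hlog := logDeriv_tprod_eq_tsum (f := fun (j : ℕ) (z : ℂ) => 1 - z * q ^ j)
    Metric.isOpen_ball (mem_ball_zero_iff.mpr hx)
    (fun j => one_sub_ne_zero_of_norm_lt_one (norm_mul_pow_lt_one hq hx j))
    (fun j => by fun_prop) (by simpa only [hfactor] using hsum.neg)
    (multipliableLocallyUniformlyOn_qPochhammer hq) (qPochhammer_ne_zero hq hx)
  simp only [hfactor, tsum_neg] at hlog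
  exact hlog

lemma hasDerivAt_qPochhammer (hq : ‖q‖ < 1) (hx0 : x ≠ 0) (hx : ‖x‖ < 1) :
    HasDerivAt (qPochhammer q) (-(lambertSeries 0 q x * qPochhammer q x / x)) x := by
  refine (analyticAt_qPochhammer hq hx).differentiableAt.hasDerivAt.congr_deriv ?_
  have hlog := logDeriv_qPochhammer hq hx
  rw [logDeriv_apply, div_eq_iff (qPochhammer_ne_zero hq hx)] at hlog
  rw [hlog, ← tsum_pow_div_one_sub_mul_pow hq hx]
  generalize ∑' j : ℕ, q ^ j / (1 - x * q ^ j) = S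
  field_simp

end LambertSeries

section WeierstrassDifference

/-- The domain on which `qTheta q` is differentiated logarithmically: the annulus
`‖q‖ < ‖z‖ < ‖q‖⁻¹` punctured at the zero `z = 1` of `qTheta q`. -/
def thetaAnnulus (q : ℂ) : Set ℂ := {z | ‖z * q‖ < 1 ∧ ‖q / z‖ < 1 ∧ z ≠ 0 ∧ z ≠ 1}

/-- The logarithmic derivative `z θ'(z) / θ(z)` of `θ = qTheta q`, as a Lambert series. -/
noncomputable def qThetaLogDeriv (q z : ℂ) : ℂ :=
  -(z / (1 - z)) - lambertSeries 0 q (z * q) + lambertSeries 0 q (q / z)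

/-- The derivative `z d/dz` of `qThetaLogDeriv`. Up to sign and an additive constant it is the
Weierstrass function `℘` in the multiplicative variable `z`. -/
noncomputable def qWeierstrass (q z : ℂ) : ℂ :=
  -(z / (1 - z) ^ 2) - lambertSeries 1 q (z * q) - lambertSeries 1 q (q / z)

variable {q x u : ℂ}

lemma thetaAnnulus_mem_nhds (hx : x ∈ thetaAnnulus q) : thetaAnnulus q ∈ 𝓝 x := by
  obtain ⟨hxq, hqx, hx0, hx1⟩ := hx
  have hmul : ContinuousAt (fun z : ℂ => ‖z * q‖) x := by fun_prop
  have hdiv : ContinuousAt (fun z : ℂ => ‖q / z‖) x := by fun_prop (disch := assumption)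
  filter_upwards [hmul.eventually_lt_const hxq, hdiv.eventually_lt_const hqx,
    isOpen_ne.mem_nhds hx0, isOpen_ne.mem_nhds hx1] with z hzq hqz hz0 hz1
  exact ⟨hzq, hqz, hz0, hz1⟩

lemma hasDerivAt_const_div (c : ℂ) (hx : x ≠ 0) :
    HasDerivAt (fun z : ℂ => c / z) (-(c / x ^ 2)) x := by
  simpa [div_eq_mul_inv] using (hasDerivAt_inv hx).const_mul c

lemma hasDerivAt_qTheta (hq0 : q ≠ 0) (hq : ‖q‖ < 1) (hx : x ∈ thetaAnnulus q) :
    HasDerivAt (qTheta q) (qThetaLogDeriv q x * qTheta q x / x) x := by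
  obtain ⟨hxq, hqx, hx0, hx1⟩ := hx
  have hsub : 1 - x ≠ 0 := sub_ne_zero.mpr hx1.symm
  have hmul := (hasDerivAt_qPochhammer hq (mul_ne_zero hx0 hq0) hxq).comp x (hasDerivAt_mul_const q)
  have hdiv := (hasDerivAt_qPochhammer hq (div_ne_zero hq0 hx0) hqx).comp x
    (hasDerivAt_const_div q hx0)
  rw [funext (qTheta_eq_one_sub_mul hq)]
  refine (((hasDerivAt_id' x).const_sub 1).mul (hmul.mul hdiv)).congr_deriv ?_
  simp only [qThetaLogDeriv, Function.comp_apply, Pi.mul_apply]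
  field_simp
  ring

lemma hasDerivAt_qThetaLogDeriv (hq0 : q ≠ 0) (hq : ‖q‖ < 1) (hx : x ∈ thetaAnnulus q) :
    HasDerivAt (qThetaLogDeriv q) (qWeierstrass q x / x) x := by
  obtain ⟨hxq, hqx, hx0, hx1⟩ := hx
  have hsub : 1 - x ≠ 0 := sub_ne_zero.mpr hx1.symm
  have hpole := ((hasDerivAt_id' x).div ((hasDerivAt_id' x).const_sub 1) hsub).neg
  have hmul := (hasDerivAt_lambertSeries 0 hq (mul_ne_zero hx0 hq0) hxq).comp x
    (hasDerivAt_mul_const q)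
  have hdiv := (hasDerivAt_lambertSeries 0 hq (div_ne_zero hq0 hx0) hqx).comp x
    (hasDerivAt_const_div q hx0)
  refine ((hpole.sub hmul).add hdiv).congr_deriv ?_
  simp only [qWeierstrass, zero_add]
  field_simp
  ring

lemma hasDerivAt_qTheta_mul_qTheta_div (hq0 : q ≠ 0) (hq : ‖q‖ < 1) {y : ℂ} (hy : y ≠ 0)
    (hmul : x * y ∈ thetaAnnulus q) (hdiv : x / y ∈ thetaAnnulus q) :
    HasDerivAt (fun y => qTheta q (x * y) * qTheta q (x / y))
      (qTheta q (x * y) * qTheta q (x / y) *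
        (qThetaLogDeriv q (x * y) - qThetaLogDeriv q (x / y)) / y) y := by
  have hx : x ≠ 0 := left_ne_zero_of_mul hmul.2.2.1
  have hderiv := ((hasDerivAt_qTheta hq0 hq hmul).comp y (hasDerivAt_const_mul x)).mul
    ((hasDerivAt_qTheta hq0 hq hdiv).comp y (hasDerivAt_const_div x hy))
  refine hderiv.congr_deriv ?_
  simp only [Function.comp_apply]
  field_simp
  ring

lemma eventually_hasDerivAt_qTheta_mul_qTheta_div (hq0 : q ≠ 0) (hq : ‖q‖ < 1)
    (hx : x ∈ thetaAnnulus q) :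
    ∀ᶠ y in 𝓝 1, HasDerivAt (fun y => qTheta q (x * y) * qTheta q (x / y))
      (qTheta q (x * y) * qTheta q (x / y) *
        (qThetaLogDeriv q (x * y) - qThetaLogDeriv q (x / y)) / y) y := by
  have hmul : ContinuousAt (fun y : ℂ => x * y) 1 := by fun_prop
  have hdiv : ContinuousAt (fun y : ℂ => x / y) 1 := by fun_prop (disch := simp)
  filter_upwards [isOpen_ne.mem_nhds one_ne_zero,
    hmul.preimage_mem_nhds (thetaAnnulus_mem_nhds (by rwa [mul_one])),
    hdiv.preimage_mem_nhds (thetaAnnulus_mem_nhds (by rwa [div_one]))] with y hy hxy hxy'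
  exact hasDerivAt_qTheta_mul_qTheta_div hq0 hq hy hxy hxy'

lemma hasDerivAt_deriv_qTheta_mul_qTheta_div (hq0 : q ≠ 0) (hq : ‖q‖ < 1)
    (hx : x ∈ thetaAnnulus q) :
    HasDerivAt (deriv fun y => qTheta q (x * y) * qTheta q (x / y))
      (2 * (qTheta q x ^ 2 * qWeierstrass q x)) 1 := by
  have hx0 : x ≠ 0 := hx.2.2.1
  have hmul : x * 1 ∈ thetaAnnulus q := by rwa [mul_one]
  have hdiv : x / 1 ∈ thetaAnnulus q := by rwa [div_one]
  have hlog := ((hasDerivAt_qThetaLogDeriv hq0 hq hmul).comp 1 (hasDerivAt_const_mul x)).sub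
    ((hasDerivAt_qThetaLogDeriv hq0 hq hdiv).comp 1 (hasDerivAt_const_div x one_ne_zero))
  have hprod := ((hasDerivAt_qTheta_mul_qTheta_div hq0 hq one_ne_zero hmul hdiv).mul hlog).div
    (hasDerivAt_id' 1) one_ne_zero
  refine (hprod.congr_deriv ?_).congr_of_eventuallyEq
    ((eventually_hasDerivAt_qTheta_mul_qTheta_div hq0 hq hx).mono fun y hy => hy.deriv)
  simp only [Pi.mul_apply, Pi.sub_apply, Function.comp_apply, mul_one, div_one, sub_self]
  field_simp
  ring

lemma hasDerivAt_deriv_sub_sq_mul {f : ℂ → ℂ} {a : ℂ} (hf : AnalyticAt ℂ f a) :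
    HasDerivAt (deriv fun z => (z - a) ^ 2 * f z) (2 * f a) a := by
  have hsub (z : ℂ) : HasDerivAt (fun z => z - a) 1 z := (hasDerivAt_id' z).sub_const a
  have hderiv : deriv (fun z => (z - a) ^ 2 * f z) =ᶠ[𝓝 a]
      fun z => (z - a) * (2 * f z + (z - a) * deriv f z) := by
    filter_upwards [hf.eventually_analyticAt] with z hz
    refine ((((hsub z).pow 2).mul hz.differentiableAt.hasDerivAt).congr_deriv ?_).deriv
    simp only [Pi.pow_apply]
    push_cast
    ring
  have hcofactor := (hf.differentiableAt.hasDerivAt.const_mul 2).add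
    ((hsub a).mul hf.deriv.differentiableAt.hasDerivAt)
  refine (((hsub a).mul hcofactor).congr_deriv ?_).congr_of_eventuallyEq hderiv
  simp

lemma analyticAt_qPochhammer_mul_qPochhammer_div (hq : ‖q‖ < 1) :
    AnalyticAt ℂ (fun y => qPochhammer q (y * q) * qPochhammer q (q / y)) 1 :=
  ((analyticAt_qPochhammer hq (by rwa [one_mul])).comp (by fun_prop)).mul
    ((analyticAt_qPochhammer hq (by rwa [div_one])).comp (by fun_prop (disch := simp)))

/-- The comparison of second derivatives in `y` at `y = 1` of the three-term relation with
`v = 1`, whose right-hand side vanishes there to second order. -/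
theorem qWeierstrass_sub_qWeierstrass (hq0 : q ≠ 0) (hq : ‖q‖ < 1) (hx : x ∈ thetaAnnulus q)
    (hu : u ∈ thetaAnnulus q) :
    (qTheta q x * qTheta q u) ^ 2 * (qWeierstrass q x - qWeierstrass q u) =
      u * eulerProd q ^ 4 * (qTheta q (x * u) * qTheta q (x / u)) := by
  set C := qTheta q (x * u) * qTheta q (x / u)
  set F : ℂ → ℂ → ℂ := fun z y => qTheta q (z * y) * qTheta q (z / y)
  set H : ℂ → ℂ := fun y => u / y * (qPochhammer q (y * q) * qPochhammer q (q / y)) ^ 2 * C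
  have hH : AnalyticAt ℂ H 1 := by
    have hcofactor := analyticAt_qPochhammer_mul_qPochhammer_div hq
    fun_prop (disch := simp)
  have hrelation : (fun y => (y - 1) ^ 2 * H y) =ᶠ[𝓝 1]
      fun y => F x y * qTheta q u ^ 2 - qTheta q x ^ 2 * F u y := by
    filter_upwards [isOpen_ne.mem_nhds one_ne_zero] with y hy
    have hthree := qTheta_three_term hq0 hq hx.2.2.1 hy hu.2.2.1 one_ne_zero
    simp only [mul_one, div_one, qTheta_eq_one_sub_mul hq y] at hthree
    linear_combination -hthree
  have hsecond {z : ℂ} (hz : z ∈ thetaAnnulus q) :=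
    hasDerivAt_deriv_qTheta_mul_qTheta_div hq0 hq hz
  have hlhs : HasDerivAt (deriv fun y => F x y * qTheta q u ^ 2 - qTheta q x ^ 2 * F u y)
      (2 * (qTheta q x ^ 2 * qWeierstrass q x) * qTheta q u ^ 2 -
        qTheta q x ^ 2 * (2 * (qTheta q u ^ 2 * qWeierstrass q u))) 1 := by
    refine (((hsecond hx).mul_const _).sub ((hsecond hu).const_mul _)).congr_of_eventuallyEq ?_
    filter_upwards [eventually_hasDerivAt_qTheta_mul_qTheta_div hq0 hq hx,
      eventually_hasDerivAt_qTheta_mul_qTheta_div hq0 hq hu] with y hxy huy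
    exact ((hxy.differentiableAt.hasDerivAt.mul_const _).sub
      (huy.differentiableAt.hasDerivAt.const_mul _)).deriv
  have hunique := hlhs.unique ((hasDerivAt_deriv_sub_sq_mul hH).congr_of_eventuallyEq
    hrelation.deriv.symm)
  simp only [H, one_mul, div_one, ← eulerProd.eq_def] at hunique
  linear_combination hunique / 2

end WeierstrassDifference

section TenthRootsOfUnity

/-- The exponent of `1 - q ^ n` in Ramanujan's product `k(q)`, a `10`-periodic function of `n`. -/
def kSign (n : ℕ) : ℤ :=
  match n % 10 with
  | 1 | 2 | 8 | 9 => 1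
  | 3 | 4 | 6 | 7 => -1
  | _ => 0

/-- The Lambert series `∑_{n ≥ 1} kSign n * n q^n / (1 - q^n)`; the logarithmic derivative
`q k'(q) / k(q)` is `1 - kLambert q`. -/
noncomputable def kLambert {K : Type*} [RCLike K] (q : K) : K :=
  ∑' n : ℕ, kSign (n + 1) * ((n + 1) * q ^ (n + 1) / (1 - q ^ (n + 1)))

/-- The Gauss sum of `kSign` at a tenth root of unity `ζ`, which is `± √5` if `ζ` is primitive. -/
def kGaussSum (ζ : ℂ) : ℂ := ζ + ζ ^ 9 - ζ ^ 3 - ζ ^ 7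

lemma ofReal_kLambert (x : ℝ) : ((kLambert x : ℝ) : ℂ) = kLambert (x : ℂ) := by
  simp [kLambert, Complex.ofReal_tsum]

variable {q ζ z w : ℂ}

lemma eval_cyclotomic_ten_eq_zero (hζ : IsPrimitiveRoot ζ 10) :
    ζ ^ 4 - ζ ^ 3 + ζ ^ 2 - ζ + 1 = 0 := by
  have hfive : ζ ^ 5 - 1 ≠ 0 :=
    sub_ne_zero.mpr (hζ.pow_ne_one_of_pos_of_lt (by norm_num) (by norm_num))
  have htwo : ζ ^ 2 - 1 ≠ 0 :=
    sub_ne_zero.mpr (hζ.pow_ne_one_of_pos_of_lt (by norm_num) (by norm_num))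
  refine mul_left_cancel₀ (mul_ne_zero hfive htwo) ?_
  linear_combination (ζ - 1) * hζ.pow_eq_one

lemma kGaussSum_sq (hζ : IsPrimitiveRoot ζ 10) : kGaussSum ζ ^ 2 = 5 := by
  have hcyc := eval_cyclotomic_ten_eq_zero hζ
  grind [kGaussSum]

lemma kGaussSum_ne_zero (hζ : IsPrimitiveRoot ζ 10) : kGaussSum ζ ≠ 0 :=
  pow_ne_zero_iff two_ne_zero |>.mp (by simp [kGaussSum_sq hζ])

lemma kGaussSum_mul_kSign (hζ : IsPrimitiveRoot ζ 10) (n : ℕ) :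
    kGaussSum ζ * kSign n = ζ ^ n + (ζ ^ 9) ^ n - (ζ ^ 3) ^ n - (ζ ^ 7) ^ n := by
  have hcyc := eval_cyclotomic_ten_eq_zero hζ
  have hperiod (m : ℕ) : (ζ ^ m) ^ n = (ζ ^ m) ^ (n % 10) :=
    pow_eq_pow_mod n (by rw [pow_right_comm, hζ.pow_eq_one, one_pow])
  rw [pow_eq_pow_mod n hζ.pow_eq_one, hperiod, hperiod, hperiod, kGaussSum, kSign]
  have hlt : n % 10 < 10 := Nat.mod_lt _ (by norm_num)
  generalize n % 10 = r at hlt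
  interval_cases r <;> push_cast <;> grind

lemma kGaussSum_eq_div_sub_div (hζ : IsPrimitiveRoot ζ 10) :
    kGaussSum ζ = ζ ^ 3 / (1 - ζ ^ 3) ^ 2 - ζ / (1 - ζ) ^ 2 := by
  have hcyc := eval_cyclotomic_ten_eq_zero hζ
  have hone : 1 - ζ ≠ 0 := sub_ne_zero.mpr (hζ.ne_one (by norm_num)).symm
  have hthree : 1 - ζ ^ 3 ≠ 0 :=
    sub_ne_zero.mpr (hζ.pow_ne_one_of_pos_of_lt (by norm_num) (by norm_num)).symm
  rw [kGaussSum]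
  field_simp
  grind

lemma kGaussSum_mul_sq (hζ : IsPrimitiveRoot ζ 10) :
    kGaussSum ζ * ((1 - ζ) * (1 - ζ ^ 3)) ^ 2 = ζ ^ 3 * ((1 - ζ ^ 4) * (1 - ζ ^ 8)) := by
  have hcyc := eval_cyclotomic_ten_eq_zero hζ
  grind [kGaussSum]

lemma kGaussSum_mul_kLambert (hζ : IsPrimitiveRoot ζ 10) (hq : ‖q‖ < 1) :
    kGaussSum ζ * kLambert q = lambertSeries 1 q (ζ * q) + lambertSeries 1 q (ζ ^ 9 * q) -
      lambertSeries 1 q (ζ ^ 3 * q) - lambertSeries 1 q (ζ ^ 7 * q) := by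
  have hsum (m : ℕ) := (summable_lambertSeries 1 hq (x := ζ ^ m * q)
    (by rwa [norm_mul, norm_pow, hζ.norm'_eq_one (by norm_num), one_pow, one_mul])).hasSum
  have htotal := (((hsum 1).add (hsum 9)).sub (hsum 3)).sub (hsum 7)
  rw [pow_one] at htotal
  simp only [lambertSeries, kLambert]
  rw [← htotal.tsum_eq, ← tsum_mul_left]
  refine tsum_congr fun n => ?_
  linear_combination ((n + 1) * q ^ (n + 1) / (1 - q ^ (n + 1))) * kGaussSum_mul_kSign hζ (n + 1)

lemma mem_thetaAnnulus_of_norm_eq_one (hq : ‖q‖ < 1) (hz : ‖z‖ = 1) (hz1 : z ≠ 1) :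
    z ∈ thetaAnnulus q :=
  ⟨by rwa [norm_mul, hz, one_mul], by rwa [norm_div, hz, div_one],
    norm_ne_zero_iff.mp (by rw [hz]; exact one_ne_zero), hz1⟩

lemma qTheta_eq_of_mul_eq_one (hq : ‖q‖ < 1) (hzw : z * w = 1) :
    qTheta q z = (1 - z) * (qPochhammer q (z * q) * qPochhammer q (w * q)) := by
  rw [qTheta_eq_one_sub_mul hq, div_eq_mul_inv, eq_inv_of_mul_eq_one_right hzw, mul_comm q]

lemma qWeierstrass_sub_qWeierstrass_pow_three (hζ : IsPrimitiveRoot ζ 10) (hq : ‖q‖ < 1) :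
    qWeierstrass q ζ - qWeierstrass q (ζ ^ 3) = kGaussSum ζ * (1 - kLambert q) := by
  have hζ0 : ζ ≠ 0 := hζ.ne_zero (by norm_num)
  have hinv : q / ζ = ζ ^ 9 * q := by
    rw [div_eq_iff hζ0]
    linear_combination -q * hζ.pow_eq_one
  have hinv' : q / ζ ^ 3 = ζ ^ 7 * q := by
    rw [div_eq_iff (pow_ne_zero 3 hζ0)]
    linear_combination -q * hζ.pow_eq_one
  rw [qWeierstrass, qWeierstrass, hinv, hinv']
  linear_combination -kGaussSum_eq_div_sub_div hζ + kGaussSum_mul_kLambert hζ hq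

lemma one_sub_kLambert_mul_sq (hζ : IsPrimitiveRoot ζ 10) (hq0 : q ≠ 0) (hq : ‖q‖ < 1) :
    (1 - kLambert q) * (qPochhammer q (ζ * q) * qPochhammer q (ζ ^ 3 * q) *
        qPochhammer q (ζ ^ 7 * q) * qPochhammer q (ζ ^ 9 * q)) ^ 2 =
      eulerProd q ^ 4 * (qPochhammer q (ζ ^ 2 * q) * qPochhammer q (ζ ^ 4 * q) *
        qPochhammer q (ζ ^ 6 * q) * qPochhammer q (ζ ^ 8 * q)) := by
  have hζ1 : ζ ≠ 1 := hζ.ne_one (by norm_num)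
  have hζ3 : ζ ^ 3 ≠ 1 := hζ.pow_ne_one_of_pos_of_lt (by norm_num) (by norm_num)
  have hnorm : ‖ζ‖ = 1 := hζ.norm'_eq_one (by norm_num)
  have hten := hζ.pow_eq_one
  have hdiff := qWeierstrass_sub_qWeierstrass hq0 hq (mem_thetaAnnulus_of_norm_eq_one hq hnorm hζ1)
    (mem_thetaAnnulus_of_norm_eq_one hq (by rw [norm_pow, hnorm, one_pow]) hζ3)
  have hdiv : ζ / ζ ^ 3 = ζ ^ 8 := by
    rw [div_eq_iff (pow_ne_zero 3 (hζ.ne_zero (by norm_num)))]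
    linear_combination -ζ * hten
  rw [qWeierstrass_sub_qWeierstrass_pow_three hζ hq, ← pow_succ', hdiv,
    qTheta_eq_of_mul_eq_one hq (w := ζ ^ 9) (by linear_combination hten),
    qTheta_eq_of_mul_eq_one hq (z := ζ ^ 3) (w := ζ ^ 7) (by linear_combination hten),
    qTheta_eq_of_mul_eq_one hq (z := ζ ^ (3 + 1)) (w := ζ ^ 6) (by linear_combination hten),
    qTheta_eq_of_mul_eq_one hq (z := ζ ^ 8) (w := ζ ^ 2) (by linear_combination hten)] at hdiff
  have hconst : kGaussSum ζ * ((1 - ζ) * (1 - ζ ^ 3)) ^ 2 ≠ 0 :=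
    mul_ne_zero (kGaussSum_ne_zero hζ) (pow_ne_zero 2
      (mul_ne_zero (sub_ne_zero.mpr hζ1.symm) (sub_ne_zero.mpr hζ3.symm)))
  refine mul_left_cancel₀ hconst ?_
  linear_combination hdiff - eulerProd q ^ 4 * (qPochhammer q (ζ ^ 2 * q) *
    qPochhammer q (ζ ^ 4 * q) * qPochhammer q (ζ ^ 6 * q) * qPochhammer q (ζ ^ 8 * q)) *
    kGaussSum_mul_sq hζ

theorem one_sub_kLambert_mul_eulerProd (hq : ‖q‖ < 1) :
    (1 - kLambert q) * eulerProd (q ^ 10) ^ 2 =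
      eulerProd q * eulerProd (q ^ 2) ^ 2 * eulerProd (q ^ 5) ^ 3 := by
  rcases eq_or_ne q 0 with rfl | hq0
  · simp [kLambert, eulerProd_zero]
  obtain ⟨ζ, hζ⟩ : ∃ ζ : ℂ, IsPrimitiveRoot ζ 10 :=
    ⟨_, Complex.isPrimitiveRoot_exp 10 (by norm_num)⟩
  have hE2 := prod_qPochhammer_pow_mul_of_isPrimitiveRoot
    (hζ.pow (by norm_num) (show 10 = 5 * 2 by norm_num)) (by norm_num) hq q
  have hE5 := prod_qPochhammer_pow_mul_of_isPrimitiveRoot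
    (hζ.pow (by norm_num) (show 10 = 2 * 5 by norm_num)) (by norm_num) hq q
  have hE10 := prod_qPochhammer_pow_mul_of_isPrimitiveRoot hζ (by norm_num) hq q
  have hT := one_sub_kLambert_mul_sq hζ hq0 hq
  simp only [prod_range_succ, prod_range_zero, ← pow_mul, Nat.reduceMul, pow_zero, pow_one, one_mul,
    ← eulerProd.eq_def] at hE2 hE5 hE10
  rw [← hE10, ← hE2, ← hE5]
  linear_combination (eulerProd q * qPochhammer q (ζ ^ 5 * q) * (qPochhammer q (ζ ^ 2 * q) *
    qPochhammer q (ζ ^ 4 * q) * qPochhammer q (ζ ^ 6 * q) * qPochhammer q (ζ ^ 8 * q))) ^ 2 * hT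

end TenthRootsOfUnity

section LevelTen

variable {q : ℂ}

/-- The part `∏ₙ (1 - q ^ (10 * n + a))` of Euler's product over one residue class modulo `10`. -/
noncomputable def residueProd (q : ℂ) (a : ℕ) : ℂ := qPochhammer (q ^ 10) (q ^ a)

lemma eulerProd_pow_eq_prod (hq : ‖q‖ < 1) {m N : ℕ} (hm : m ≠ 0) (hN : 0 < N) :
    eulerProd (q ^ m) = ∏ i ∈ range N, qPochhammer (q ^ (m * N)) (q ^ (m * (i + 1))) := by
  rw [eulerProd, qPochhammer_eq_prod_qPochhammer_pow (norm_pow_lt_one hq hm) _ hN]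
  simp only [← pow_mul, ← pow_add, mul_add, mul_one, add_comm]

lemma eulerProd_pow_eq_prod_residueProd (hq : ‖q‖ < 1) {m N : ℕ} (hmN : m * N = 10) :
    eulerProd (q ^ m) = ∏ i ∈ range N, residueProd q (m * (i + 1)) := by
  have hm : m ≠ 0 := by rintro rfl; simp at hmN
  have hN : 0 < N := Nat.pos_of_ne_zero (by rintro rfl; simp at hmN)
  rw [eulerProd_pow_eq_prod hq hm hN, hmN]
  rfl

lemma residueProd_ne_zero (hq : ‖q‖ < 1) {a : ℕ} (ha : a ≠ 0) : residueProd q a ≠ 0 :=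
  qPochhammer_ne_zero (norm_pow_lt_one hq (by norm_num)) (norm_pow_lt_one hq ha)

lemma qTheta_pow_add (hq0 : q ≠ 0) (a b : ℕ) :
    qTheta (q ^ (a + b)) (q ^ a) =
      qPochhammer (q ^ (a + b)) (q ^ a) * qPochhammer (q ^ (a + b)) (q ^ b) := by
  rw [qTheta, pow_add, mul_div_cancel_left₀ _ (pow_ne_zero a hq0)]

lemma qTheta_neg_pow_add (hq0 : q ≠ 0) (a b : ℕ) :
    qTheta (q ^ (a + b)) (-q ^ a) =
      qPochhammer (q ^ (a + b)) (-q ^ a) * qPochhammer (q ^ (a + b)) (-q ^ b) := by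
  rw [qTheta, pow_add, div_neg, mul_div_cancel_left₀ _ (pow_ne_zero a hq0)]

lemma qTheta_pow_eq_residueProd_mul (hq0 : q ≠ 0) {a b : ℕ} (hab : a + b = 10) :
    qTheta (q ^ 10) (q ^ a) = residueProd q a * residueProd q b := by
  simpa only [residueProd, hab] using qTheta_pow_add hq0 a b

lemma qPochhammer_mul_qPochhammer_neg (hq : ‖q‖ < 1) (x : ℂ) :
    qPochhammer q x * qPochhammer q (-x) = qPochhammer (q ^ 2) (x ^ 2) := by
  simpa [prod_range_succ] using prod_qPochhammer_pow_mul_of_isPrimitiveRoot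
    (IsPrimitiveRoot.neg_one 0 two_ne_zero.symm) two_pos hq x

lemma qTheta_neg_self (hq0 : q ≠ 0) (hq : ‖q‖ < 1) :
    qTheta q (-q) = 2 * qPochhammer q (-q) ^ 2 := by
  rw [qTheta, div_neg, div_self hq0, qPochhammer_eq_one_sub_mul hq (-1), neg_one_mul]
  ring

lemma eulerProd_eq_residueProd (hq : ‖q‖ < 1) :
    eulerProd q = residueProd q 1 * residueProd q 2 * residueProd q 3 * residueProd q 4 *
      residueProd q 5 * residueProd q 6 * residueProd q 7 * residueProd q 8 * residueProd q 9 *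
      residueProd q 10 := by
  simpa [prod_range_succ] using eulerProd_pow_eq_prod_residueProd hq (one_mul 10)

lemma eulerProd_sq_eq_residueProd (hq : ‖q‖ < 1) :
    eulerProd (q ^ 2) = residueProd q 2 * residueProd q 4 * residueProd q 6 * residueProd q 8 *
      residueProd q 10 := by
  simpa [prod_range_succ] using
    eulerProd_pow_eq_prod_residueProd hq (show 2 * 5 = 10 by norm_num)

lemma eulerProd_pow_five_eq_residueProd (hq : ‖q‖ < 1) :
    eulerProd (q ^ 5) = residueProd q 5 * residueProd q 10 := by
  simpa [prod_range_succ] using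
    eulerProd_pow_eq_prod_residueProd hq (show 5 * 2 = 10 by norm_num)

/-- For `Jₐ = θ(q ^ a; q ^ 10)` this is `J₂² J₄² = J₁ J₃ J₅² + q J₁² J₃²`. -/
theorem eulerProd_sum_relation (hq : ‖q‖ < 1) :
    eulerProd (q ^ 2) ^ 4 * eulerProd (q ^ 5) ^ 2 * eulerProd (q ^ 10) =
      q * eulerProd q ^ 2 * eulerProd (q ^ 10) ^ 5 +
        eulerProd q * eulerProd (q ^ 2) * eulerProd (q ^ 5) ^ 5 := by
  rcases eq_or_ne q 0 with rfl | hq0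
  · simp [eulerProd_zero]
  have hE10 : eulerProd (q ^ 10) = residueProd q 10 := rfl
  have hJ {a b : ℕ} (hab : a + b = 10) := qTheta_pow_eq_residueProd_mul hq0 hab
  have hJ1 : qTheta (q ^ 10) q = residueProd q 1 * residueProd q 9 := by
    simpa using hJ (show 1 + 9 = 10 by norm_num)
  have hrel := qTheta_quintic_relation (pow_ne_zero 10 hq0) (norm_pow_lt_one hq (by norm_num)) hq0
  rw [hJ1, hJ (b := 8) rfl, hJ (b := 7) rfl, hJ (b := 6) rfl, hJ (b := 5) rfl, hJ (b := 4) rfl,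
    hJ (b := 3) rfl] at hrel
  rw [eulerProd_eq_residueProd hq, eulerProd_sq_eq_residueProd hq,
    eulerProd_pow_five_eq_residueProd hq, hE10]
  linear_combination (residueProd q 2 * residueProd q 4 * residueProd q 5 * residueProd q 6 *
    residueProd q 8) ^ 2 * residueProd q 10 ^ 7 * hrel

/-- For `Jₐ = θ(q ^ a; q ^ 10)` this is `J₃² J₄² = J₂ J₄ J₅² + q² J₁² J₂²`; the quotient `ρ` is
`k(q) / q`. -/
theorem one_sub_sq_mul_eulerProd (hq : ‖q‖ < 1) {ρ : ℂ}
    (hρ : ρ * (residueProd q 3 * residueProd q 4 * residueProd q 6 * residueProd q 7) =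
      residueProd q 1 * residueProd q 2 * residueProd q 8 * residueProd q 9) :
    (1 - (q * ρ) ^ 2) * (eulerProd q * eulerProd (q ^ 10) ^ 5) =
      ρ * (eulerProd (q ^ 2) * eulerProd (q ^ 5) ^ 5) := by
  have hE10 : eulerProd (q ^ 10) = residueProd q 10 := rfl
  rcases eq_or_ne q 0 with rfl | hq0
  · have hone {a : ℕ} (ha : a ≠ 0) : residueProd 0 a = 1 := by
      simp [residueProd, qPochhammer, ha]
    simp_all [eulerProd_zero]
  have hJ {a b : ℕ} (hab : a + b = 10) := qTheta_pow_eq_residueProd_mul hq0 hab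
  have hJ1 : qTheta (q ^ 10) q = residueProd q 1 * residueProd q 9 := by
    simpa using hJ (show 1 + 9 = 10 by norm_num)
  have hrel := qTheta_decic_relation (pow_ne_zero 10 hq0) (norm_pow_lt_one hq (by norm_num)) hq0
  rw [hJ1, hJ (b := 8) rfl, hJ (b := 7) rfl, hJ (b := 6) rfl, hJ (b := 5) rfl, hJ (b := 4) rfl,
    hJ (b := 3) rfl, hJ (b := 1) rfl] at hrel
  have hne : residueProd q 3 * residueProd q 4 * residueProd q 6 * residueProd q 7 ≠ 0 := by
    simp [residueProd_ne_zero hq]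
  rw [eulerProd_eq_residueProd hq, eulerProd_sq_eq_residueProd hq,
    eulerProd_pow_five_eq_residueProd hq, hE10]
  have hdiff : (residueProd q 3 * residueProd q 4 * residueProd q 6 * residueProd q 7) ^ 2 *
      (1 - (q * ρ) ^ 2) =
      residueProd q 5 ^ 4 * (residueProd q 2 * residueProd q 4 * residueProd q 6 *
        residueProd q 8) := by
    linear_combination hrel - q ^ 2 * (ρ * (residueProd q 3 * residueProd q 4 * residueProd q 6 *
      residueProd q 7) + residueProd q 1 * residueProd q 2 * residueProd q 8 * residueProd q 9) * hρ
  apply mul_left_cancel₀ (pow_ne_zero 2 hne)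
  rw [← mul_assoc, hdiff]
  linear_combination -(residueProd q 3 * residueProd q 4 * residueProd q 6 * residueProd q 7 *
    (residueProd q 2 * residueProd q 4 * residueProd q 6 * residueProd q 8 * residueProd q 5 ^ 5 *
      residueProd q 10 ^ 6)) * hρ

lemma qTheta_nome_mul (hq0 : q ≠ 0) (hq : ‖q‖ < 1) {x : ℂ} (hx : x ≠ 0) :
    qTheta q (q * x) = -(qTheta q x / x) := by
  rw [← qTheta_inv hq hx, ← qTheta_nome_div hq0 x⁻¹, div_inv_eq_mul]

lemma eulerProd_eq_qTheta_mul (hq0 : q ≠ 0) (hq : ‖q‖ < 1) :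
    eulerProd q = qTheta (q ^ 5) q * qTheta (q ^ 5) (q ^ 2) * eulerProd (q ^ 5) := by
  have hE := eulerProd_pow_eq_prod hq one_ne_zero (N := 5) (by norm_num)
  have hθ1 := qTheta_pow_add hq0 1 4
  have hθ2 := qTheta_pow_add hq0 2 3
  simp only [prod_range_succ, prod_range_zero, one_mul, pow_one, zero_add, Nat.reduceAdd]
    at hE hθ1 hθ2
  rw [hE, hθ1, hθ2, eulerProd]
  ring

lemma eulerProd_sq_eq_qTheta_mul (hq0 : q ≠ 0) (hq : ‖q‖ < 1) :
    eulerProd (q ^ 2) = qTheta (q ^ 5) q * qTheta (q ^ 5) (q ^ 2) *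
      (qTheta (q ^ 5) (-q) * qTheta (q ^ 5) (-q ^ 2)) * eulerProd (q ^ 10) := by
  have hsplit (i : ℕ) : residueProd q (2 * i) =
      qPochhammer (q ^ 5) (q ^ i) * qPochhammer (q ^ 5) (-q ^ i) := by
    rw [qPochhammer_mul_qPochhammer_neg (norm_pow_lt_one hq (by norm_num)), ← pow_mul, ← pow_mul,
      mul_comm i, residueProd]
  have hE := eulerProd_sq_eq_residueProd hq
  rw [hsplit 1, hsplit 2, hsplit 3, hsplit 4] at hE
  have hθ1 := qTheta_pow_add hq0 1 4
  have hθ2 := qTheta_pow_add hq0 2 3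
  have hθ1' := qTheta_neg_pow_add hq0 1 4
  have hθ2' := qTheta_neg_pow_add hq0 2 3
  simp only [pow_one, Nat.reduceAdd] at hE hθ1 hθ2 hθ1' hθ2'
  rw [hE, hθ1, hθ2, hθ1', hθ2', residueProd, eulerProd]
  ring

lemma qTheta_pow_five_relation (hq0 : q ≠ 0) (hq : ‖q‖ < 1) :
    (qTheta (q ^ 5) q * qTheta (q ^ 5) (q ^ 2)) ^ 2 =
      (qTheta (q ^ 5) (-q) * qTheta (q ^ 5) (-q ^ 2)) ^ 2 -
        4 * q * (qTheta (q ^ 5) (-q) * qTheta (q ^ 5) (-q ^ 2)) *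
          qPochhammer (q ^ 5) (-q ^ 5) ^ 4 := by
  have hq5 : ‖q ^ 5‖ < 1 := norm_pow_lt_one hq (by norm_num)
  have hp0 : q ^ 5 ≠ 0 := pow_ne_zero 5 hq0
  have hrel := qTheta_quintic_relation hp0 hq5 (neg_ne_zero.mpr hq0)
  have h4 : qTheta (q ^ 5) (q ^ 4) = qTheta (q ^ 5) q := by
    rw [← qTheta_nome_div hp0 q, show q ^ 5 / q = q ^ 4 by field_simp]
  have h6 : qTheta (q ^ 5) (q ^ 6) = -(qTheta (q ^ 5) q / q) := by
    rw [← qTheta_nome_mul hp0 hq5 hq0, ← pow_succ]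
  have h3 : qTheta (q ^ 5) (-q ^ 3) = qTheta (q ^ 5) (-q ^ 2) := by
    rw [← qTheta_nome_div hp0 (-q ^ 2), show q ^ 5 / -q ^ 2 = -q ^ 3 by field_simp]
  have h7 : qTheta (q ^ 5) (-q ^ 7) = qTheta (q ^ 5) (-q ^ 2) / q ^ 2 := by
    rw [show -q ^ 7 = q ^ 5 * -q ^ 2 by ring,
      qTheta_nome_mul hp0 hq5 (neg_ne_zero.mpr (pow_ne_zero 2 hq0)), div_neg, neg_neg]
  rw [show (-q) ^ 2 = q ^ 2 by ring, show (-q) ^ 4 = q ^ 4 by ring, show (-q) ^ 6 = q ^ 6 by ring,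
    show (-q) ^ 3 = -q ^ 3 by ring, show (-q) ^ 5 = -q ^ 5 by ring, show (-q) ^ 7 = -q ^ 7 by ring,
    h3, h4, h6, h7, qTheta_neg_self hp0 hq5] at hrel
  field_simp at hrel
  linear_combination -hrel

theorem eulerProd_diff_relation (hq : ‖q‖ < 1) :
    eulerProd q ^ 4 * eulerProd (q ^ 5) * eulerProd (q ^ 10) ^ 2 =
      eulerProd (q ^ 2) ^ 2 * eulerProd (q ^ 5) ^ 5 -
        4 * q * eulerProd q * eulerProd (q ^ 2) * eulerProd (q ^ 10) ^ 5 := by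
  rcases eq_or_ne q 0 with rfl | hq0
  · simp [eulerProd_zero]
  have hE10 : eulerProd (q ^ 10) = qPochhammer (q ^ 5) (-q ^ 5) * eulerProd (q ^ 5) := by
    have hneg := qPochhammer_mul_qPochhammer_neg (norm_pow_lt_one hq (n := 5) (by norm_num))
      (q ^ 5)
    rw [← pow_mul] at hneg
    rw [eulerProd, ← hneg, mul_comm, eulerProd]
  rw [eulerProd_eq_qTheta_mul hq0 hq, eulerProd_sq_eq_qTheta_mul hq0 hq, hE10]
  linear_combination eulerProd (q ^ 5) ^ 7 * qPochhammer (q ^ 5) (-q ^ 5) ^ 2 *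
    (qTheta (q ^ 5) q * qTheta (q ^ 5) (q ^ 2)) ^ 2 * qTheta_pow_five_relation hq0 hq

end LevelTen

section LogarithmOfProduct

/-- The logarithm of the generalised eta product `∏ₙ (1 - x ^ (n + 1)) ^ c n`. -/
noncomputable def logEtaProd (c : ℕ → ℝ) (x : ℝ) : ℝ := ∑' n : ℕ, c n * log (1 - x ^ (n + 1))

variable {c : ℕ → ℝ} {x : ℝ}

lemma one_sub_pow_succ_pos (hx : |x| < 1) (n : ℕ) : 0 < 1 - x ^ (n + 1) := by
  have hpow : |x ^ (n + 1)| < 1 := by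
    rw [abs_pow]
    exact pow_lt_one₀ (abs_nonneg x) hx n.succ_ne_zero
  linarith [le_abs_self (x ^ (n + 1))]

lemma hasDerivAt_log_one_sub_pow (hx : |x| < 1) (n : ℕ) :
    HasDerivAt (fun y : ℝ => log (1 - y ^ (n + 1))) (-((n + 1) * x ^ n / (1 - x ^ (n + 1)))) x :=
  (((hasDerivAt_pow (n + 1) x).const_sub 1).log (one_sub_pow_succ_pos hx n).ne').congr_deriv (by
    rw [Nat.add_sub_cancel, neg_div]
    push_cast
    rfl)

lemma norm_mul_lambertTerm_le {C r : ℝ} (hc : ∀ n, |c n| ≤ C) (hr : r < 1) (hx : |x| < r) (n : ℕ) :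
    ‖c n * -((n + 1) * x ^ n / (1 - x ^ (n + 1)))‖ ≤ C * (((n : ℝ) + 1) ^ 1 * r ^ n / (1 - r)) := by
  have hC : 0 ≤ C := (abs_nonneg (c n)).trans (hc n)
  have hr0 : 0 ≤ r := (abs_nonneg x).trans hx.le
  have hterm := norm_lambertTerm_le (K := ℝ) (q := x) (hx.trans hr) 1 n hx.le
  rw [pow_one] at hterm
  rw [norm_mul, norm_neg]
  refine mul_le_mul (hc n) (hterm.trans ?_) (norm_nonneg _) hC
  rw [pow_one]
  have : 0 < 1 - r := sub_pos.mpr hr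
  gcongr
  exact hx.le

lemma summable_logEtaProd (hc : ∃ C, ∀ n, |c n| ≤ C) (hx : |x| < 1) :
    Summable fun n : ℕ => c n * log (1 - x ^ (n + 1)) := by
  obtain ⟨C, hC⟩ := hc
  have hpow : Summable fun n : ℕ => -x ^ (n + 1) :=
    ((summable_nat_add_iff 1).mpr (summable_geometric_of_abs_lt_one hx)).neg
  refine .of_norm_bounded ((Real.summable_log_one_add_of_summable hpow).norm.mul_left C) fun n => ?_
  rw [norm_mul, ← sub_eq_add_neg]
  gcongr
  exact hC n

lemma hasDerivAt_logEtaProd (hc : ∃ C, ∀ n, |c n| ≤ C) (hx : |x| < 1) :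
    HasDerivAt (logEtaProd c) (∑' n : ℕ, c n * -((n + 1) * x ^ n / (1 - x ^ (n + 1)))) x := by
  obtain ⟨C, hC⟩ := hc
  obtain ⟨r, hxr, hr⟩ := exists_between hx
  have hr0 : 0 < r := (abs_nonneg x).trans_lt hxr
  exact hasDerivAt_tsum_of_isPreconnected
    (g := fun (n : ℕ) (y : ℝ) => c n * log (1 - y ^ (n + 1)))
    (((summable_succ_pow_mul_geometric 1 hr0.le hr).div_const (1 - r)).mul_left C)
    Metric.isOpen_ball (convex_ball (0 : ℝ) r).isPreconnected
    (fun n y hy => (hasDerivAt_log_one_sub_pow ((mem_ball_zero_iff.mp hy).trans hr) n).const_mul _)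
    (fun n y hy => norm_mul_lambertTerm_le hC hr (mem_ball_zero_iff.mp hy) n)
    (Metric.mem_ball_self hr0) (by simp [summable_zero]) (mem_ball_zero_iff.mpr hxr)

end LogarithmOfProduct

section RamanujanFunction

/-- The quotient `k(x) / x`, written as an exponential so that it is visibly positive and
differentiable, also at `x = 0`. -/
noncomputable def kQuotient (x : ℝ) : ℝ := exp (logEtaProd (fun n => kSign (n + 1)) x)

variable {x : ℝ}

lemma kQuotient_pos (x : ℝ) : 0 < kQuotient x := exp_pos _

lemma abs_kSign_le_one (n : ℕ) : |(kSign n : ℝ)| ≤ 1 := by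
  rw [kSign]
  split <;> simp

lemma kSign_mul_ten_add (j a : ℕ) : kSign (j * 10 + a) = kSign a := by
  rw [kSign, kSign, Nat.mul_add_mod_self_right]

lemma hasSum_kSign_mul_log (hx : |x| < 1) :
    HasSum (fun j : ℕ => ∑ a : Fin 10, kSign (a + 1) * log (1 - x ^ (10 * j + (a + 1))))
      (logEtaProd (fun n => kSign (n + 1)) x) := by
  have hsum := (summable_logEtaProd (c := fun n => kSign (n + 1))
    ⟨1, fun n => abs_kSign_le_one (n + 1)⟩ hx).hasSum
  refine (((Nat.divModEquiv 10).symm.hasSum_iff.mpr hsum).prod_fiberwise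
    fun j => hasSum_fintype _).congr_fun fun j => sum_congr rfl fun a _ => ?_
  have hindex : (Nat.divModEquiv 10).symm (j, a) = j * 10 + a := by simp [Nat.divModEquiv]
  rw [Function.comp_apply, hindex, add_assoc, kSign_mul_ten_add, mul_comm j]

lemma hasProd_kQuotient (hx : |x| < 1) :
    HasProd (fun j : ℕ =>
      ((1 - x ^ (10 * j + 1)) * (1 - x ^ (10 * j + 2)) * (1 - x ^ (10 * j + 8)) *
          (1 - x ^ (10 * j + 9))) /
        ((1 - x ^ (10 * j + 3)) * (1 - x ^ (10 * j + 4)) * (1 - x ^ (10 * j + 6)) *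
          (1 - x ^ (10 * j + 7)))) (kQuotient x) := by
  refine (hasSum_kSign_mul_log hx).rexp.congr_fun fun j => ?_
  have hexp (a : ℕ) : exp (kSign (a + 1) * log (1 - x ^ (10 * j + (a + 1)))) =
      (1 - x ^ (10 * j + (a + 1))) ^ kSign (a + 1) := by
    have hpos : 0 < 1 - x ^ (10 * j + (a + 1)) := one_sub_pow_succ_pos hx (10 * j + a)
    rw [mul_comm, exp_mul, exp_log hpos, rpow_intCast]
  rw [Function.comp_apply, exp_sum]
  simp only [hexp]
  rw [Fin.prod_univ_eq_prod_range
    (fun a => (1 - x ^ (10 * j + (a + 1))) ^ kSign (a + 1)) 10]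
  simp only [kSign, prod_range_succ, prod_range_zero, zero_add, one_mul, mul_one, Nat.reduceAdd,
    Nat.reduceMod, zpow_one, zpow_neg, zpow_zero]
  field_simp

lemma ramK_eq_mul_kQuotient (hx : |x| < 1) : ramK x = x * kQuotient x := by
  rw [ramK, (hasProd_kQuotient hx).tprod_eq]

lemma hasDerivAt_ramK (hx : |x| < 1) : HasDerivAt ramK (kQuotient x * (1 - kLambert x)) x := by
  have hlog := hasDerivAt_logEtaProd (c := fun n => kSign (n + 1))
    ⟨1, fun n => abs_kSign_le_one (n + 1)⟩ hx
  have heq : ramK =ᶠ[𝓝 x] fun y => y * kQuotient y := by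
    filter_upwards [isOpen_lt continuous_abs continuous_const |>.mem_nhds hx] with y hy
    exact ramK_eq_mul_kQuotient hy
  have hlambert : x * ∑' n : ℕ, (kSign (n + 1) : ℝ) * -((n + 1) * x ^ n / (1 - x ^ (n + 1))) =
      -kLambert x := by
    rw [kLambert, ← tsum_mul_left, ← tsum_neg]
    exact tsum_congr fun n => by ring
  refine (((hasDerivAt_id' x).mul hlog.exp).congr_of_eventuallyEq heq).congr_deriv ?_
  rw [kQuotient]
  linear_combination exp (logEtaProd (fun n => kSign (n + 1)) x) * hlambert

lemma hasProd_residueProd {q : ℂ} (hq : ‖q‖ < 1) (a : ℕ) :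
    HasProd (fun j : ℕ => 1 - q ^ (10 * j + a)) (residueProd q a) := by
  refine (multipliable_qPochhammer (norm_pow_lt_one hq (by norm_num)) (q ^ a)).hasProd.congr_fun
    fun j => ?_
  rw [← pow_mul, ← pow_add, add_comm]

lemma kQuotient_mul_residueProd (hx : |x| < 1) :
    (kQuotient x : ℂ) *
        (residueProd x 3 * residueProd x 4 * residueProd x 6 * residueProd x 7) =
      residueProd x 1 * residueProd x 2 * residueProd x 8 * residueProd x 9 := by
  have hx' : ‖(x : ℂ)‖ < 1 := by simpa using hx
  have hres (a : ℕ) := hasProd_residueProd hx' a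
  have hquot := (hasProd_kQuotient hx).map Complex.ofRealHom Complex.continuous_ofReal
  refine (hquot.mul ((((hres 3).mul (hres 4)).mul (hres 6)).mul (hres 7))).unique
    (((((hres 1).mul (hres 2)).mul (hres 8)).mul (hres 9)).congr_fun fun j => ?_)
  have hne (a : ℕ) : 1 - (x : ℂ) ^ (10 * j + a + 1) ≠ 0 := one_sub_pow_succ_ne_zero hx' _
  have h3 := hne 2
  have h4 := hne 3
  have h6 := hne 5
  have h7 := hne 6
  simp only [Function.comp_apply, Complex.ofRealHom_eq_coe]
  push_cast
  field_simp

variable {q : ℝ}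

lemma eulerProd_ofReal_pow (hq : |q| < 1) {n : ℕ} (hn : n ≠ 0) :
    eulerProd ((q : ℂ) ^ n) = eulerE (q ^ n) := by
  rw [ofReal_eulerE (by rw [abs_pow]; exact pow_lt_one₀ (abs_nonneg q) hq hn), Complex.ofReal_pow]

lemma eulerE_ne_zero (hq : |q| < 1) : eulerE q ≠ 0 := by
  rw [← Complex.ofReal_ne_zero, ofReal_eulerE hq]
  exact eulerProd_ne_zero (by simpa using hq)

lemma eulerE_pow_ne_zero (hq : |q| < 1) {n : ℕ} (hn : n ≠ 0) : eulerE (q ^ n) ≠ 0 :=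
  eulerE_ne_zero (by rw [abs_pow]; exact pow_lt_one₀ (abs_nonneg q) hq hn)

lemma one_sub_kLambert_eq (hq : |q| < 1) :
    1 - kLambert q = eulerE q * eulerE (q ^ 2) ^ 2 * eulerE (q ^ 5) ^ 3 / eulerE (q ^ 10) ^ 2 := by
  have hrel := one_sub_kLambert_mul_eulerProd (q := q) (by simpa using hq)
  rw [← ofReal_kLambert, ← ofReal_eulerE hq, eulerProd_ofReal_pow hq two_ne_zero,
    eulerProd_ofReal_pow hq (by norm_num), eulerProd_ofReal_pow hq (by norm_num)] at hrel
  rw [eq_div_iff (pow_ne_zero 2 (eulerE_pow_ne_zero hq (by norm_num)))]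
  exact_mod_cast hrel

lemma one_sub_ramK_sq_mul (hq : |q| < 1) :
    (1 - ramK q ^ 2) * (eulerE q * eulerE (q ^ 10) ^ 5) =
      kQuotient q * (eulerE (q ^ 2) * eulerE (q ^ 5) ^ 5) := by
  have hrel := one_sub_sq_mul_eulerProd (q := q) (by simpa using hq) (kQuotient_mul_residueProd hq)
  rw [← ofReal_eulerE hq, eulerProd_ofReal_pow hq two_ne_zero,
    eulerProd_ofReal_pow hq (by norm_num), eulerProd_ofReal_pow hq (by norm_num)] at hrel
  rw [ramK_eq_mul_kQuotient hq]
  exact_mod_cast hrel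

lemma one_add_ramK_sub_sq (hq : |q| < 1) :
    1 + ramK q - ramK q ^ 2 = kQuotient q *
      (eulerE (q ^ 2) ^ 4 * eulerE (q ^ 5) ^ 2 / (eulerE q ^ 2 * eulerE (q ^ 10) ^ 4)) := by
  have hrel := eulerProd_sum_relation (q := q) (by simpa using hq)
  rw [← ofReal_eulerE hq, eulerProd_ofReal_pow hq two_ne_zero,
    eulerProd_ofReal_pow hq (by norm_num), eulerProd_ofReal_pow hq (by norm_num)] at hrel
  norm_cast at hrel
  have hE1 := eulerE_ne_zero hq
  have hE10 := eulerE_pow_ne_zero hq (n := 10) (by norm_num)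
  rw [mul_div_assoc', eq_div_iff (by positivity)]
  refine mul_left_cancel₀ hE10 ?_
  linear_combination eulerE q * one_sub_ramK_sq_mul hq - kQuotient q * hrel +
    eulerE q ^ 2 * eulerE (q ^ 10) ^ 5 * ramK_eq_mul_kQuotient hq

lemma one_sub_four_mul_ramK_sub_sq (hq : |q| < 1) :
    1 - 4 * ramK q - ramK q ^ 2 = kQuotient q *
      (eulerE q ^ 3 * eulerE (q ^ 5) / (eulerE (q ^ 2) * eulerE (q ^ 10) ^ 3)) := by
  have hrel := eulerProd_diff_relation (q := q) (by simpa using hq)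
  rw [← ofReal_eulerE hq, eulerProd_ofReal_pow hq two_ne_zero,
    eulerProd_ofReal_pow hq (by norm_num), eulerProd_ofReal_pow hq (by norm_num)] at hrel
  norm_cast at hrel
  have hE1 := eulerE_ne_zero hq
  have hE2 := eulerE_pow_ne_zero hq two_ne_zero
  have hE10 := eulerE_pow_ne_zero hq (n := 10) (by norm_num)
  rw [mul_div_assoc', eq_div_iff (by positivity)]
  refine mul_left_cancel₀ (mul_ne_zero hE1 (pow_ne_zero 2 hE10)) ?_
  linear_combination eulerE (q ^ 2) * one_sub_ramK_sq_mul hq - kQuotient q * hrel -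
    4 * eulerE q * eulerE (q ^ 2) * eulerE (q ^ 10) ^ 5 * ramK_eq_mul_kQuotient hq

lemma hasDerivAt_neg_one_add_sq_div {f : ℝ → ℝ} {f' : ℝ} (hf : HasDerivAt f f' q)
    (hden : 1 + f q - f q ^ 2 ≠ 0) :
    HasDerivAt (fun x => -((1 + f x ^ 2) / (1 + f x - f x ^ 2)))
      (f' * (1 - 4 * f q - f q ^ 2) / (1 + f q - f q ^ 2) ^ 2) q := by
  refine (((hf.pow 2).const_add 1).div ((hf.const_add 1).sub (hf.pow 2)) hden).neg.congr_deriv ?_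
  simp only [Pi.pow_apply, Pi.sub_apply]
  rw [← neg_div]
  congr 1
  push_cast
  ring

end RamanujanFunction

theorem stmt_11_general (q : ℝ) (hq : |q| < 1) :
    HasDerivAt (fun x : ℝ => -((1 + ramK x ^ 2) / (1 + ramK x - ramK x ^ 2)))
      (eulerE q ^ 8 * eulerE (q ^ 10) ^ 3 / eulerE (q ^ 2) ^ 7) q := by
  have hE1 := eulerE_ne_zero hq
  have hE2 := eulerE_pow_ne_zero hq two_ne_zero
  have hE5 := eulerE_pow_ne_zero hq (n := 5) (by norm_num)
  have hE10 := eulerE_pow_ne_zero hq (n := 10) (by norm_num)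
  have hρ := (kQuotient_pos q).ne'
  have hden : 1 + ramK q - ramK q ^ 2 ≠ 0 := by
    rw [one_add_ramK_sub_sq hq]
    positivity
  refine (hasDerivAt_neg_one_add_sq_div (hasDerivAt_ramK hq) hden).congr_deriv ?_
  rw [one_sub_kLambert_eq hq, one_sub_four_mul_ramK_sub_sq hq, one_add_ramK_sub_sq hq]
  field_simp

theorem stmt_11 (q : ℝ) (hq0 : 0 < q) (hq1 : q < 1) :
    HasDerivAt (fun x : ℝ => -((1 + ramK x ^ 2) / (1 + ramK x - ramK x ^ 2)))
      (eulerE q ^ 8 * eulerE (q ^ 10) ^ 3 / eulerE (q ^ 2) ^ 7) q :=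
  stmt_11_general q (by rwa [abs_of_pos hq0])
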